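/- arXiv:1711.02170 — 7 statements merged into one kernel-verified Lean document; each statement's English description precedes it below -/
import Mathlib

section
/- Let K be a finite extension of ℚ₂ with valuation ring O_K, normalized valuation v (so v(π)=1 for a uniformizer π), and e = v(2). Let c₄, c₆, Δ ∈ O_K satisfy c₄³ − c₆² = 1728Δ and Δ ≠ 0. Then there exists a Weierstrass curve with coefficients a₁, a₂, a₃, a₄, a₆ ∈ O_K whose invariants are c₄ and c₆ if and only if one of the following holds: (1) v(c₄) = 0 and there exists a₁ ∈ O_K with a₁² ≡ −c₆ (mod 4); (2) 0 < v(c₄) < 4e and there exist a₁, a₃ ∈ O_K such that, with d = −a₁⁶ + 3a₁²c₄ + 2c₆, one has d ≡ 0 (mod 16), 16a₃² ≡ d (mod 64), and 4a₁²d ≡ (a₁⁴ − c₄)² (mod 256); (3) v(c₄) ≥ 4e and there exists a₃ ∈ O_K with 8a₃² ≡ c₆ (mod 32). -/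
/-!
Since `3` is a unit, a translation makes `a₂ = 0`.  Then `b₂ = a₁²`, `24 b₄ = a₁⁴ - c₄` and
`432 b₆ = a₁⁶ - 3 a₁² c₄ - 2 c₆`, and given `a₁`, `a₃` these come from integral `a₄`, `a₆` exactly
when `b₄ ≡ a₁ a₃ (mod 2)` and `b₆ ≡ a₃² (mod 4)`.  The congruences on `c₄` and `c₆` only control
the square of `b₄`; integral closedness removes the square: they give `4 ∣ y² + 2 a₁ a₃ y` for
`y = b₄ - a₁ a₃`, so `y / 2` is a root of a monic quadratic.  In the same way, if `16 ∣ c₄` then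
`a₁ / 2` is a root of a monic quartic.
-/

section IntegrallyClosed

open Polynomial

theorem dvd_of_pow_dvd_pow_add_mul {R : Type*} [CommRing R] [IsDomain R] [IsIntegrallyClosed R]
    {b y m : R} {n : ℕ} (h : b ^ (n + 2) ∣ y ^ (n + 2) + b ^ (n + 1) * m * y) : b ∣ y := by
  rcases eq_or_ne b 0 with rfl | hb
  · simpa using h
  obtain ⟨k, hk⟩ := h
  have hb' : algebraMap R (FractionRing R) b ≠ 0 := by simpa using hb
  have quotient_integral :
      IsIntegral R (algebraMap R (FractionRing R) y / algebraMap R (FractionRing R) b) := by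
    refine ⟨X ^ (n + 2) + (C m * X - C k), monic_X_pow_add (by compute_degree!; lia), ?_⟩
    have hk' := congrArg (algebraMap R (FractionRing R)) hk
    simp only [map_add, map_mul, map_pow] at hk'
    simp only [eval₂_add, eval₂_sub, eval₂_mul, eval₂_pow, eval₂_X, eval₂_C, div_pow]
    field_simp
    linear_combination algebraMap R (FractionRing R) b * hk'
  obtain ⟨t, ht⟩ := IsIntegrallyClosed.isIntegral_iff.mp quotient_integral
  refine ⟨t, IsFractionRing.injective R (FractionRing R) ?_⟩
  rw [map_mul, ht, mul_div_cancel₀ _ hb']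

end IntegrallyClosed

section WeierstrassModels

variable {R : Type*} [CommRing R]

theorem exists_weierstrassCurve_a₂_eq_zero (h3 : IsUnit (3 : R)) (W : WeierstrassCurve R) :
    ∃ W' : WeierstrassCurve R, W'.a₂ = 0 ∧ W'.c₄ = W.c₄ ∧ W'.c₆ = W.c₆ := by
  obtain ⟨w, hw⟩ := h3.exists_right_inv
  let C : WeierstrassCurve.VariableChange R := ⟨1, -w * W.a₂, 0, 0⟩
  refine ⟨C • W, ?_, ?_, ?_⟩
  · simp only [C, WeierstrassCurve.variableChange_a₂, inv_one, Units.val_one]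
    linear_combination -W.a₂ * hw
  · simp [C, WeierstrassCurve.variableChange_c₄]
  · simp [C, WeierstrassCurve.variableChange_c₆]

theorem exists_weierstrassCurve_b₂_b₄_b₆ {a₁ a₃ b₂ b₄ b₆ : R} (h₂ : 4 ∣ b₂ - a₁ ^ 2)
    (h₄ : 2 ∣ b₄ - a₁ * a₃) (h₆ : 4 ∣ b₆ - a₃ ^ 2) :
    ∃ W : WeierstrassCurve R, W.b₂ = b₂ ∧ W.b₄ = b₄ ∧ W.b₆ = b₆ := by
  obtain ⟨a₂, ha₂⟩ := h₂
  obtain ⟨a₄, ha₄⟩ := h₄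
  obtain ⟨a₆, ha₆⟩ := h₆
  refine ⟨⟨a₁, a₂, a₃, a₄, a₆⟩, ?_, ?_, ?_⟩
  · rw [WeierstrassCurve.b₂, ← ha₂, add_sub_cancel]
  · rw [WeierstrassCurve.b₄, ← ha₄, sub_add_cancel]
  · rw [WeierstrassCurve.b₆, ← ha₆, add_sub_cancel]

theorem exists_weierstrassCurve_iff_of_isUnit_c₄ {c₄ c₆ Δ : R} (hc₄ : IsUnit c₄)
    (hrel : c₄ ^ 3 - c₆ ^ 2 = 1728 * Δ) :
    (∃ W : WeierstrassCurve R, W.c₄ = c₄ ∧ W.c₆ = c₆) ↔ ∃ a₁ : R, 4 ∣ a₁ ^ 2 + c₆ := by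
  constructor
  · rintro ⟨W, -, rfl⟩
    exact ⟨W.a₁ ^ 3, -3 * W.a₁ ^ 4 * W.a₂ - 12 * W.a₁ ^ 2 * W.a₂ ^ 2 - 16 * W.a₂ ^ 3
      + 9 * W.b₂ * W.b₄ - 54 * W.b₆, by rw [WeierstrassCurve.c₆, WeierstrassCurve.b₂]; ring⟩
  · rintro ⟨a, k, hk⟩
    obtain ⟨i, hi⟩ := hc₄.exists_right_inv
    have hi2 : c₄ ^ 2 * i ^ 2 = 1 := by rw [← mul_pow, hi, one_pow]
    have hi3 : c₄ ^ 3 * i ^ 3 = 1 := by rw [← mul_pow, hi, one_pow]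
    -- Choose `b₂ = -c₆ / c₄`; the formulas for `c₄` and `c₆` then determine `b₄` and `b₆`.
    obtain ⟨W, hb₂, hb₄, hb₆⟩ := exists_weierstrassCurve_b₂_b₄_b₆
      (a₁ := a * c₆ * i ^ 2) (a₃ := 0) (b₂ := -c₆ * i) (b₄ := -72 * Δ * i ^ 2)
      (b₆ := 4 * Δ * c₆ * i ^ 3)
      ⟨-k * c₆ ^ 2 * i ^ 4 - 432 * Δ * c₆ * i ^ 4, by
        linear_combination (-c₆ ^ 2 * i ^ 4) * hk + c₆ * i * hi3 - c₆ * i ^ 4 * hrel⟩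
      ⟨-36 * Δ * i ^ 2, by ring⟩ ⟨Δ * c₆ * i ^ 3, by ring⟩
    refine ⟨W, ?_, ?_⟩
    · rw [WeierstrassCurve.c₄, hb₂, hb₄]
      linear_combination (-i ^ 2) * hrel + c₄ * hi2
    · rw [WeierstrassCurve.c₆, hb₂, hb₄, hb₆]
      linear_combination (-c₆ * i ^ 3) * hrel + c₆ * hi3

theorem exists_weierstrassCurve_of_sixteen_dvd_c₄ (h3 : IsUnit (3 : R)) {c₄ c₆ a₃ : R}
    (hc₄ : 16 ∣ c₄) (hc₆ : 32 ∣ 8 * a₃ ^ 2 - c₆) :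
    ∃ W : WeierstrassCurve R, W.c₄ = c₄ ∧ W.c₆ = c₆ := by
  obtain ⟨w, hw⟩ := h3.exists_right_inv
  obtain ⟨l, rfl⟩ := hc₄
  obtain ⟨k, hk⟩ := hc₆
  have hw3 : 3 ^ 3 * w ^ 3 = 1 := by rw [← mul_pow, hw, one_pow]
  obtain ⟨W, hb₂, hb₄, hb₆⟩ := exists_weierstrassCurve_b₂_b₄_b₆
    (a₁ := 0) (a₃ := a₃) (b₂ := 0) (b₄ := -2 * w * l) (b₆ := w ^ 3 * (4 * k - a₃ ^ 2))
    (by simp) ⟨-w * l, by ring⟩ ⟨w ^ 3 * (k - 7 * a₃ ^ 2), by linear_combination a₃ ^ 2 * hw3⟩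
  refine ⟨W, ?_, ?_⟩
  · rw [WeierstrassCurve.c₄, hb₂, hb₄]
    linear_combination (16 * l) * hw
  · rw [WeierstrassCurve.c₆, hb₂, hb₄, hb₆]
    linear_combination (-8 * (4 * k - a₃ ^ 2)) * hw3 + hk

/-- Kraus's congruences at `2` relating `c₄`, `c₆` to the candidate coefficients `a₁`, `a₃` of a
Weierstrass curve with `a₂ = 0`.  The repeated expression is the `d` of the paper; for such a curve
it equals `-432 b₆`, while `a₁ ^ 4 - c₄` equals `24 b₄`. -/
def KrausCongruences (c₄ c₆ a₁ a₃ : R) : Prop :=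
  16 ∣ -a₁ ^ 6 + 3 * a₁ ^ 2 * c₄ + 2 * c₆ ∧
  64 ∣ 16 * a₃ ^ 2 - (-a₁ ^ 6 + 3 * a₁ ^ 2 * c₄ + 2 * c₆) ∧
  256 ∣ 4 * a₁ ^ 2 * (-a₁ ^ 6 + 3 * a₁ ^ 2 * c₄ + 2 * c₆) - (a₁ ^ 4 - c₄) ^ 2

theorem krausCongruences_of_a₂_eq_zero {W : WeierstrassCurve R} (ha₂ : W.a₂ = 0) :
    KrausCongruences W.c₄ W.c₆ W.a₁ W.a₃ := by
  have hb₄ : W.a₁ ^ 4 - W.c₄ = 24 * W.b₄ := by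
    rw [WeierstrassCurve.c₄, WeierstrassCurve.b₂, ha₂]; ring
  have hb₆ : -W.a₁ ^ 6 + 3 * W.a₁ ^ 2 * W.c₄ + 2 * W.c₆ = -432 * W.b₆ := by
    rw [WeierstrassCurve.c₆, WeierstrassCurve.c₄, WeierstrassCurve.b₂, ha₂]; ring
  rw [KrausCongruences, hb₄, hb₆, WeierstrassCurve.b₄, WeierstrassCurve.b₆]
  exact ⟨⟨-27 * (W.a₃ ^ 2 + 4 * W.a₆), by ring⟩, ⟨7 * W.a₃ ^ 2 + 27 * W.a₆, by ring⟩,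
    ⟨-9 * (W.a₁ ^ 2 * W.a₃ ^ 2 + 3 * W.a₁ ^ 2 * W.a₆ + W.a₄ ^ 2 + W.a₁ * W.a₃ * W.a₄), by ring⟩⟩

variable [IsDomain R] [IsIntegrallyClosed R]

theorem two_dvd_a₁_of_sixteen_dvd_c₄ {W : WeierstrassCurve R} (ha₂ : W.a₂ = 0)
    (hc₄ : 16 ∣ W.c₄) : 2 ∣ W.a₁ := by
  obtain ⟨l, hl⟩ := hc₄
  rw [WeierstrassCurve.c₄, WeierstrassCurve.b₂, WeierstrassCurve.b₄, ha₂] at hl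
  exact dvd_of_pow_dvd_pow_add_mul (m := -3 * W.a₃) (n := 2)
    ⟨l + 3 * W.a₄, by linear_combination hl⟩

theorem exists_weierstrassCurve_iff_of_sixteen_dvd_c₄ (h3 : IsUnit (3 : R)) {c₄ c₆ : R}
    (hc₄ : 16 ∣ c₄) :
    (∃ W : WeierstrassCurve R, W.c₄ = c₄ ∧ W.c₆ = c₆) ↔ ∃ a₃ : R, 32 ∣ 8 * a₃ ^ 2 - c₆ := by
  refine ⟨?_, fun ⟨_, hc₆⟩ ↦ exists_weierstrassCurve_of_sixteen_dvd_c₄ h3 hc₄ hc₆⟩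
  rintro ⟨W, rfl, rfl⟩
  obtain ⟨W, ha₂, hW₄, hW₆⟩ := exists_weierstrassCurve_a₂_eq_zero h3 W
  rw [← hW₄] at hc₄
  rw [← hW₆]
  obtain ⟨b, hb⟩ := two_dvd_a₁_of_sixteen_dvd_c₄ ha₂ hc₄
  refine ⟨W.a₃, 2 * b ^ 6 - 9 * b ^ 2 * (W.a₄ + b * W.a₃) + 7 * W.a₃ ^ 2 + 27 * W.a₆, ?_⟩
  rw [WeierstrassCurve.c₆, WeierstrassCurve.b₂, WeierstrassCurve.b₄, WeierstrassCurve.b₆, ha₂, hb]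
  ring

theorem KrausCongruences.exists_b₄_b₆ (h2 : (2 : R) ≠ 0) (h3 : IsUnit (3 : R)) {c₄ c₆ a₁ a₃ : R}
    (h : KrausCongruences c₄ c₆ a₁ a₃) :
    ∃ b₄ b₆ : R, 2 ∣ b₄ - a₁ * a₃ ∧ 4 ∣ b₆ - a₃ ^ 2 ∧
      a₁ ^ 4 - c₄ = 24 * b₄ ∧ -a₁ ^ 6 + 3 * a₁ ^ 2 * c₄ + 2 * c₆ = -432 * b₆ := by
  obtain ⟨w, hw⟩ := h3.exists_right_inv
  have hw3 : 3 ^ 3 * w ^ 3 = 1 := by rw [← mul_pow, hw, one_pow]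
  obtain ⟨⟨d, hd⟩, ⟨k, hk⟩, ⟨l, hl⟩⟩ := h
  rw [hd] at hk hl
  obtain ⟨f, hf⟩ : 8 ∣ a₁ ^ 4 - c₄ := by
    rw [← IsIntegrallyClosed.pow_dvd_pow_iff two_ne_zero]
    exact ⟨a₁ ^ 2 * d - 4 * l, by linear_combination -hl⟩
  rw [hf] at hl
  have hd_eq : d = a₃ ^ 2 - 4 * k :=
    mul_left_cancel₀ (pow_ne_zero 4 h2) (by linear_combination -hk)
  have hf_sq : f ^ 2 = a₁ ^ 2 * d - 4 * l :=
    mul_left_cancel₀ (pow_ne_zero 6 h2) (by linear_combination -hl)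
  refine ⟨w * f, -w ^ 3 * d, ?_, ?_, ?_, ?_⟩
  · refine dvd_of_pow_dvd_pow_add_mul (m := a₁ * a₃) (n := 0)
      ⟨-w ^ 2 * (l + a₁ ^ 2 * k + 2 * a₁ ^ 2 * a₃ ^ 2), ?_⟩
    linear_combination w ^ 2 * hf_sq + w ^ 2 * a₁ ^ 2 * hd_eq
      + (a₁ ^ 2 * a₃ ^ 2) * (3 * w + 1) * hw
  · exact ⟨w ^ 3 * (k - 7 * a₃ ^ 2), by linear_combination -w ^ 3 * hd_eq + a₃ ^ 2 * hw3⟩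
  · linear_combination hf - 8 * f * hw
  · linear_combination hd - 16 * d * hw3

theorem exists_weierstrassCurve_iff_krausCongruences (h2 : (2 : R) ≠ 0) (h3 : IsUnit (3 : R))
    {c₄ c₆ : R} :
    (∃ W : WeierstrassCurve R, W.c₄ = c₄ ∧ W.c₆ = c₆) ↔
      ∃ a₁ a₃ : R, KrausCongruences c₄ c₆ a₁ a₃ := by
  constructor
  · rintro ⟨W, rfl, rfl⟩
    obtain ⟨W', ha₂, hW₄, hW₆⟩ := exists_weierstrassCurve_a₂_eq_zero h3 W
    exact ⟨W'.a₁, W'.a₃, hW₄ ▸ hW₆ ▸ krausCongruences_of_a₂_eq_zero ha₂⟩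
  · rintro ⟨a₁, a₃, h⟩
    obtain ⟨b₄, b₆, hdvd₄, hdvd₆, hc₄, hc₆⟩ := h.exists_b₄_b₆ h2 h3
    obtain ⟨W, hb₂, rfl, rfl⟩ :=
      exists_weierstrassCurve_b₂_b₄_b₆ (b₂ := a₁ ^ 2) (by simp) hdvd₄ hdvd₆
    refine ⟨W, ?_, mul_left_cancel₀ h2 ?_⟩
    · rw [WeierstrassCurve.c₄, hb₂]
      linear_combination hc₄
    · rw [WeierstrassCurve.c₆, hb₂]
      linear_combination -hc₆ - 3 * a₁ ^ 2 * hc₄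

theorem kraus_criterion_integral_weierstrass_model_general (h2 : (2 : R) ≠ 0)
    (h3 : IsUnit (3 : R)) {c₄ c₆ Δ : R} (hrel : c₄ ^ 3 - c₆ ^ 2 = 1728 * Δ) :
    (∃ W : WeierstrassCurve R, W.c₄ = c₄ ∧ W.c₆ = c₆) ↔
      (IsUnit c₄ ∧ ∃ a₁ : R, 4 ∣ a₁ ^ 2 + c₆) ∨
      (¬ IsUnit c₄ ∧ ¬ 16 ∣ c₄ ∧ ∃ a₁ a₃ : R, KrausCongruences c₄ c₆ a₁ a₃) ∨
      (16 ∣ c₄ ∧ ∃ a₃ : R, 32 ∣ 8 * a₃ ^ 2 - c₆) := by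
  constructor
  · intro hW
    by_cases hunit : IsUnit c₄
    · exact .inl ⟨hunit, (exists_weierstrassCurve_iff_of_isUnit_c₄ hunit hrel).mp hW⟩
    by_cases hdvd : 16 ∣ c₄
    · exact .inr (.inr ⟨hdvd, (exists_weierstrassCurve_iff_of_sixteen_dvd_c₄ h3 hdvd).mp hW⟩)
    · exact .inr (.inl ⟨hunit, hdvd, (exists_weierstrassCurve_iff_krausCongruences h2 h3).mp hW⟩)
  · rintro (⟨hunit, h⟩ | ⟨-, -, h⟩ | ⟨hdvd, h⟩)
    · exact (exists_weierstrassCurve_iff_of_isUnit_c₄ hunit hrel).mpr h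
    · exact (exists_weierstrassCurve_iff_krausCongruences h2 h3).mpr h
    · exact (exists_weierstrassCurve_iff_of_sixteen_dvd_c₄ h3 hdvd).mpr h

end WeierstrassModels

section Valuation

theorem eq_emultiplicity_of_forall_eq_natCast_iff {M : Type*} [Monoid M] {a b : M} {k : ℕ∞}
    (h : ∀ n : ℕ, k = n ↔ a ^ n ∣ b ∧ ¬ a ^ (n + 1) ∣ b) : k = emultiplicity a b := by
  induction k with
  | top =>
    symm
    by_contra hne
    obtain ⟨n, hn⟩ := ENat.ne_top_iff_exists.mp hne
    exact ENat.top_ne_natCast n ((h n).mpr (emultiplicity_eq_coe.mp hn.symm))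
  | coe n => exact (emultiplicity_eq_coe.mpr ((h n).mp rfl)).symm

variable {R : Type*} [CommRing R] [IsDomain R] [ValuationRing R] {π : R}

theorem isUnit_iff_emultiplicity_eq_zero (hπ : Irreducible π) {x : R} :
    IsUnit x ↔ emultiplicity π x = 0 := by
  rw [emultiplicity_eq_zero]
  refine ⟨fun hx hdvd ↦ hπ.not_isUnit (isUnit_of_dvd_unit hdvd hx), fun hx ↦ ?_⟩
  rcases ValuationRing.dvd_total π x with h | h
  · exact absurd h hx
  · exact (hπ.dvd_iff.mp h).resolve_right fun hassoc ↦ hx hassoc.dvd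

theorem associated_pow_of_emultiplicity_eq (hπ : Irreducible π) {x : R} {n : ℕ}
    (h : emultiplicity π x = n) : Associated (π ^ n) x := by
  obtain ⟨⟨u, rfl⟩, hndvd⟩ := emultiplicity_eq_coe.mp h
  refine associated_mul_unit_right _ _ ((isUnit_iff_emultiplicity_eq_zero hπ).mpr ?_)
  rw [emultiplicity_eq_zero]
  exact fun hu ↦ hndvd (pow_succ π n ▸ mul_dvd_mul_left _ hu)

theorem mul_le_emultiplicity_iff_pow_dvd (hπ : Irreducible π) {a x : R} {e : ℕ}
    (he : emultiplicity π a = e) (k : ℕ) : (k * e : ℕ) ≤ emultiplicity π x ↔ a ^ k ∣ x := by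
  rw [← pow_dvd_iff_le_emultiplicity, mul_comm, pow_mul]
  exact ((associated_pow_of_emultiplicity_eq hπ he).pow_pow).dvd_iff_dvd_left

theorem isUnit_natCast_of_coprime {p : ℕ} [Fact p.Prime] {K : Type*} [Field K]
    [Algebra ℚ_[p] K] {O : ValuationSubring K}
    (hO : ∀ x : ℚ_[p], ‖x‖ ≤ 1 → algebraMap ℚ_[p] K x ∈ O) {n : ℕ} (hn : p.Coprime n) :
    IsUnit (n : O) := by
  let f : ℤ_[p] →+* O := ((algebraMap ℚ_[p] K).comp PadicInt.Coe.ringHom).codRestrict O.toSubring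
    fun x ↦ hO x x.norm_le_one
  have hn_unit : IsUnit (n : ℤ_[p]) :=
    PadicInt.isUnit_iff.mpr (PadicInt.norm_natCast_eq_one_iff.mpr hn)
  simpa using hn_unit.map f

end Valuation

/-- **Kraus's criterion** (Proposition: Kraus). Let `K` be a finite extension of `ℚ₂` with
valuation ring `O` (pinned down as the valuation subring extending the `2`-adic one),
normalized valuation `v` (characterized via an irreducible element `π`, with `v 0 = ⊤`) and
`e = v 2`.  Given `c₄, c₆, Δ ∈ O` with `c₄ ^ 3 - c₆ ^ 2 = 1728 * Δ ≠ 0`, there is an integral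
Weierstrass model with invariants `c₄` and `c₆` iff one of the three listed congruence
conditions holds. -/
theorem kraus_criterion_integral_weierstrass_model
    (K : Type*) [Field K] [Algebra ℚ_[2] K] [FiniteDimensional ℚ_[2] K]
    (O : ValuationSubring K)
    (hO : ∀ x : ℚ_[2], algebraMap ℚ_[2] K x ∈ O ↔ ‖x‖ ≤ 1)
    (v : O → ℕ∞) (π : O) (hπ : Irreducible π)
    (hv : ∀ x : O, x ≠ 0 → ∀ n : ℕ, v x = n ↔ (π ^ n ∣ x ∧ ¬ π ^ (n + 1) ∣ x))
    (hv0 : v 0 = ⊤)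
    (e : ℕ) (he : (e : ℕ∞) = v 2)
    (c₄ c₆ Δ : O) (hΔ : Δ ≠ 0) (hrel : c₄ ^ 3 - c₆ ^ 2 = 1728 * Δ) :
    (∃ W : WeierstrassCurve O, W.c₄ = c₄ ∧ W.c₆ = c₆) ↔
      ((v c₄ = 0 ∧ ∃ a₁ : O, (4 : O) ∣ a₁ ^ 2 + c₆) ∨
       (0 < v c₄ ∧ v c₄ < (4 * e : ℕ) ∧ ∃ a₁ a₃ : O,
          (16 : O) ∣ (-a₁ ^ 6 + 3 * a₁ ^ 2 * c₄ + 2 * c₆) ∧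
          (64 : O) ∣ (16 * a₃ ^ 2 - (-a₁ ^ 6 + 3 * a₁ ^ 2 * c₄ + 2 * c₆)) ∧
          (256 : O) ∣ (4 * a₁ ^ 2 * (-a₁ ^ 6 + 3 * a₁ ^ 2 * c₄ + 2 * c₆) - (a₁ ^ 4 - c₄) ^ 2)) ∨
       ((4 * e : ℕ) ≤ v c₄ ∧ ∃ a₃ : O, (32 : O) ∣ (8 * a₃ ^ 2 - c₆))) := by
  have : CharZero K := charZero_of_injective_algebraMap (algebraMap ℚ_[2] K).injective
  have h2 : (2 : O) ≠ 0 := fun h ↦ two_ne_zero (congrArg Subtype.val h : (2 : K) = 0)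
  have h3 : IsUnit (3 : O) :=
    mod_cast isUnit_natCast_of_coprime (fun x ↦ (hO x).mpr) (n := 3) (by decide)
  have hv_eq (x : O) : v x = emultiplicity π x := by
    rcases eq_or_ne x 0 with rfl | hx
    · rw [hv0, emultiplicity_zero]
    · exact eq_emultiplicity_of_forall_eq_natCast_iff (hv x hx)
  have hunit : v c₄ = 0 ↔ IsUnit c₄ := by rw [hv_eq, isUnit_iff_emultiplicity_eq_zero hπ]
  have h16 : (4 * e : ℕ) ≤ v c₄ ↔ 16 ∣ c₄ := by
    rw [hv_eq, mul_le_emultiplicity_iff_pow_dvd hπ (hv_eq 2 ▸ he.symm)]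
    norm_num
  rw [pos_iff_ne_zero, ne_eq, ← not_le, hunit, h16]
  exact kraus_criterion_integral_weierstrass_model_general h2 h3 hrel
end

section
/- Let K be a finite extension of ℚ₂ with valuation ring O_K, and let α ∈ O_K be a unit of O_K which is not a square in K. Then the quadratic extension K(√α)/K is unramified if and only if there exists a unit u ∈ O_K such that u² ≡ α (mod 4). -/
/-!
If `4 ∣ u ^ 2 - α`, then `γ = (√α + u) / 2` is a root of `X ^ 2 - u X + (u ^ 2 - α) / 4`, whose
derivative takes the unit value `√α` at `γ`; hence the different is trivial.

Conversely, choose `u` such that `j = min (v (u ^ 2 - α)) (v 4)` is maximal. Every residue is a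
square, so an even `j < v 4` could be increased: either `4 ∣ u ^ 2 - α`, or `j = 2 i + 1` with
`π ^ (i + 1) ∣ 2`. In the latter case `(√α - u) / π ^ i` is a root of an Eisenstein polynomial,
which forces `π ∈ Q ^ 2`.
-/

open IsLocalRing Polynomial

section Eisenstein

variable {S : Type*} [CommRing S]

theorem mem_sq_of_sq_add_mul_add_eq_zero {Q : Ideal S} [Q.IsPrime] {a b y : S}
    (ha : a ∈ Q) (hb : b ∈ Q) (hy : y ^ 2 + a * y + b = 0) : b ∈ Q ^ 2 := by
  have hyQ : y ∈ Q := ‹Q.IsPrime›.mem_of_pow_mem 2 <| by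
    rw [show y ^ 2 = -(y * a + b) by linear_combination hy]
    exact Q.neg_mem (Q.add_mem (Q.mul_mem_left y ha) hb)
  rw [show b = -(y * y + a * y) by linear_combination hy, sq]
  exact neg_mem (add_mem (Ideal.mul_mem_mul hyQ hyQ) (Ideal.mul_mem_mul ha hyQ))

variable [IsDomain S] [IsIntegrallyClosed S]

theorem dvd_of_sq_add_mul_add_sq_mul_eq_zero {c p q s : S}
    (hs : s ^ 2 + c * p * s + c ^ 2 * q = 0) : c ∣ s := by
  rcases eq_or_ne c 0 with rfl | hc
  · simp_all
  have hcK : algebraMap S (FractionRing S) c ≠ 0 := by simpa using hc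
  have hint : IsIntegral S (algebraMap S (FractionRing S) s / algebraMap S _ c) := by
    refine ⟨X ^ 2 + C p * X + C q, by monicity!, ?_⟩
    have hsK := congrArg (algebraMap S (FractionRing S)) hs
    simp only [map_add, map_mul, map_pow, map_zero] at hsK
    simp only [eval₂_add, eval₂_mul, eval₂_pow, eval₂_X, eval₂_C]
    field_simp
    linear_combination hsK
  obtain ⟨y, hy⟩ := IsIntegrallyClosed.isIntegral_iff.mp hint
  refine ⟨y, FaithfulSMul.algebraMap_injective S (FractionRing S) ?_⟩
  rw [map_mul, hy, mul_div_cancel₀ _ hcK]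

theorem mem_sq_of_sq_sub_sq_eq_pow_odd_mul {Q : Ideal S} [Q.IsPrime] {π u b w : S} {i : ℕ}
    (hπ : π ∈ Q) (h2 : π ^ (i + 1) ∣ 2) (hw : IsUnit w)
    (hub : u ^ 2 - b ^ 2 = π ^ (2 * i + 1) * w) : π ∈ Q ^ 2 := by
  obtain ⟨d, hd⟩ := h2
  rcases eq_or_ne π 0 with rfl | hπ0
  · exact zero_mem _
  have hbu : (b - u) ^ 2 + π ^ i * (π * (d * u)) * (b - u) + (π ^ i) ^ 2 * (π * w) = 0 := by
    linear_combination -hub - u * (b - u) * hd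
  obtain ⟨y, hy⟩ := dvd_of_sq_add_mul_add_sq_mul_eq_zero hbu
  have heis : y ^ 2 + π * (d * u) * y + π * w = 0 := by
    refine (mul_eq_zero.mp ?_).resolve_left (pow_ne_zero 2 (pow_ne_zero i hπ0))
    rw [hy] at hbu
    linear_combination hbu
  exact (Ideal.mul_unit_mem_iff_mem _ hw).mp <|
    mem_sq_of_sq_add_mul_add_eq_zero (Q.mul_mem_right _ hπ) (Q.mul_mem_right w hπ) heis

end Eisenstein

section SquareApproximation

variable {R : Type*} [CommRing R]

theorem exists_sub_pow_mem_maximalIdeal [IsLocalRing R] (p : ℕ) [ExpChar (ResidueField R) p]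
    [PerfectRing (ResidueField R) p] (x : R) : ∃ t, x - t ^ p ∈ maximalIdeal R := by
  obtain ⟨z, hz⟩ := surjective_frobenius (ResidueField R) p (residue R x)
  obtain ⟨t, rfl⟩ := residue_surjective z
  refine ⟨t, (residue_eq_zero_iff _).mp ?_⟩
  rw [map_sub, map_pow, sub_eq_zero, ← hz, frobenius_def]

theorem exists_pow_succ_dvd_sq_sub {π α u : R} {i : ℕ} (hsq : ∀ x : R, ∃ t, π ∣ x - t ^ 2)
    (h2 : π ^ (i + 1) ∣ 2) (hu : π ^ (2 * i) ∣ u ^ 2 - α) :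
    ∃ v, π ^ (2 * i + 1) ∣ v ^ 2 - α := by
  obtain ⟨w, hw⟩ := hu
  obtain ⟨d, hd⟩ := h2
  obtain ⟨t, c, hc⟩ := hsq (-w)
  exact ⟨u + π ^ i * t, d * u * t - c, by
    linear_combination hw + π ^ i * u * t * hd - π ^ (2 * i) * hc⟩

theorem exists_four_dvd_sq_sub_or_eq_pow_odd_mul [IsDomain R] [IsDiscreteValuationRing R]
    (h2 : (2 : R) ≠ 0) {π : R} (hπ : Irreducible π) (hsq : ∀ x : R, ∃ t, π ∣ x - t ^ 2) (α : R) :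
    (∃ u, 4 ∣ u ^ 2 - α) ∨
      ∃ u w : R, ∃ i : ℕ, IsUnit w ∧ π ^ (i + 1) ∣ 2 ∧ u ^ 2 - α = π ^ (2 * i + 1) * w := by
  classical
  obtain ⟨e, ε, h2e⟩ := IsDiscreteValuationRing.eq_unit_mul_pow_irreducible h2 hπ
  have h4 : (4 : R) ∣ π ^ (2 * e) := by
    have h4e : (4 : R) = ↑(ε ^ 2) * π ^ (2 * e) := by
      push_cast
      linear_combination (2 + ↑ε * π ^ e) * h2e
    exact h4e ▸ Units.mul_left_dvd.mpr dvd_rfl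
  have hpow {k : ℕ} (hk : k ≤ e) : π ^ k ∣ 2 := h2e ▸ (pow_dvd_pow π hk).mul_left _
  let P (j : ℕ) := ∃ u, π ^ j ∣ u ^ 2 - α
  let j := Nat.findGreatest P (2 * e)
  obtain ⟨u, hu⟩ : P j := Nat.findGreatest_spec bot_le ⟨0, by simp⟩
  have hmax (hj : j < 2 * e) : ¬ P (j + 1) :=
    Nat.findGreatest_is_greatest (Nat.lt_succ_self j) hj
  rcases (show j ≤ 2 * e from Nat.findGreatest_le _).eq_or_lt with hj | hj
  · exact .inl ⟨u, h4.trans (hj ▸ hu)⟩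
  rcases Nat.even_or_odd' j with ⟨i, hi | hi⟩
  · exact absurd (hi ▸ exists_pow_succ_dvd_sq_sub hsq (hpow (by lia)) (hi ▸ hu)) (hmax hj)
  · obtain ⟨w, hw⟩ := hu
    have hπw : ¬ π ∣ w := fun ⟨c, hc⟩ => hmax hj ⟨u, c, by rw [hw, hc]; ring⟩
    refine .inr ⟨u, w, i, ?_, hpow (by lia), hi ▸ hw⟩
    rwa [← notMem_maximalIdeal, hπ.maximalIdeal_eq, Ideal.mem_span_singleton]

end SquareApproximation

section Ramified

variable {R S : Type*} [CommRing R] [IsDomain R] [IsDiscreteValuationRing R] [CommRing S]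
  [IsDomain S] [IsIntegrallyClosed S] [Algebra R S]

theorem ramificationIdx'_ne_one_of_sq_sub_eq_pow_odd_mul {π α u w : R} {b : S} {i : ℕ}
    (hπ : Irreducible π) (hb : b ^ 2 = algebraMap R S α) (h2 : π ^ (i + 1) ∣ 2) (hw : IsUnit w)
    (hu : u ^ 2 - α = π ^ (2 * i + 1) * w) (Q : Ideal S) [Q.IsPrime]
    [hQ : Q.LiesOver (maximalIdeal R)] : (maximalIdeal R).ramificationIdx' Q ≠ 1 := by
  have hπQ : algebraMap R S π ∈ Q :=
    (hQ.over ▸ (mem_maximalIdeal π).mpr hπ.not_isUnit : π ∈ Q.under R)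
  have hπQ2 : algebraMap R S π ∈ Q ^ 2 :=
    mem_sq_of_sq_sub_sq_eq_pow_odd_mul (u := algebraMap R S u) (b := b) (i := i) hπQ
      (by simpa only [map_pow, map_ofNat] using map_dvd (algebraMap R S) h2)
      (hw.map (algebraMap R S))
      (by rw [hb, ← map_pow, ← map_sub, hu, map_mul, map_pow])
  rw [Ideal.ramificationIdx'_ne_one_iff (Ideal.map_le_iff_le_comap.mpr hQ.over.le),
    hπ.maximalIdeal_eq, Ideal.map_span, Set.image_singleton, Ideal.span_singleton_le_iff_mem]
  exact hπQ2

theorem exists_isUnit_four_dvd_sq_sub_of_ramificationIdx'_eq_one [PerfectField (ResidueField R)]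
    [FaithfulSMul R S] [Algebra.IsIntegral R S] (h2 : (2 : R) ≠ 0) {α : R} (hα : IsUnit α) {b : S}
    (hb : b ^ 2 = algebraMap R S α)
    (hunram : ∀ Q : Ideal S, Q.IsMaximal → Q.LiesOver (maximalIdeal R) →
      (maximalIdeal R).ramificationIdx' Q = 1) :
    ∃ u : R, IsUnit u ∧ 4 ∣ u ^ 2 - α := by
  by_cases h2u : IsUnit (2 : R)
  · exact ⟨1, isUnit_one, (show (4 : R) = 2 ^ 2 by norm_num) ▸ (h2u.pow 2).dvd⟩
  have h2m : (2 : R) ∈ maximalIdeal R := (mem_maximalIdeal _).mpr h2u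
  have : CharP (ResidueField R) 2 := CharTwo.of_one_ne_zero_of_two_eq_zero one_ne_zero <| by
    rw [← map_ofNat (residue R) 2]
    exact (residue_eq_zero_iff _).mpr h2m
  obtain ⟨π, hπ⟩ := IsDiscreteValuationRing.exists_irreducible R
  have hsq (x : R) : ∃ t, π ∣ x - t ^ 2 := by
    simpa only [hπ.maximalIdeal_eq, Ideal.mem_span_singleton]
      using exists_sub_pow_mem_maximalIdeal 2 x
  rcases exists_four_dvd_sq_sub_or_eq_pow_odd_mul h2 hπ hsq α with
    ⟨u, hu⟩ | ⟨u, w, i, hw, hi, hu⟩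
  · refine ⟨u, not_not.mp fun hum => ?_, hu⟩
    have h24 : (4 : R) ∈ maximalIdeal R :=
      (show (4 : R) = 2 * 2 by norm_num) ▸ Ideal.mul_mem_left _ _ h2m
    have hαm : u ^ 2 - (u ^ 2 - α) ∈ maximalIdeal R :=
      sub_mem (Ideal.pow_mem_of_mem _ hum 2 two_pos) (Ideal.mem_of_dvd _ hu h24)
    exact (mem_maximalIdeal _).mp (sub_sub_cancel (u ^ 2) α ▸ hαm) hα
  · obtain ⟨Q, hQ, hQR⟩ := Ideal.exists_ideal_over_maximal_of_isIntegral (S := S) (maximalIdeal R)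
      (by simp [(RingHom.injective_iff_ker_eq_bot _).mp (FaithfulSMul.algebraMap_injective R S)])
    have : Q.LiesOver (maximalIdeal R) := ⟨hQR.symm⟩
    exact absurd (hunram Q hQ this)
      (ramificationIdx'_ne_one_of_sq_sub_eq_pow_odd_mul hπ hb hi hw hu Q)

end Ramified

section Different

attribute [local instance] FractionRing.liftAlgebra

theorem isSeparable_fractionRing (A K L B : Type*) [CommRing A] [IsDomain A] [Field K]
    [Algebra A K] [IsFractionRing A K] [CommRing B] [IsDomain B] [Field L] [Algebra B L]
    [IsFractionRing B L] [Algebra A B] [Module.IsTorsionFree A B] [Algebra K L] [Algebra A L]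
    [IsScalarTower A K L] [IsScalarTower A B L] [Algebra.IsSeparable K L] :
    Algebra.IsSeparable (FractionRing A) (FractionRing B) := by
  refine .of_equiv_equiv (FractionRing.algEquiv A K).symm.toRingEquiv
    (FractionRing.algEquiv B L).symm.toRingEquiv ?_
  ext _
  exact IsFractionRing.algEquiv_commutes (FractionRing.algEquiv A K).symm
    (FractionRing.algEquiv B L).symm _

theorem isUnit_aeval_derivative_minpoly {A B : Type*} [CommRing A] [IsDomain A]
    [IsIntegrallyClosed A] [CommRing B] [IsDomain B] [Algebra A B] [Module.IsTorsionFree A B]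
    {x : B} (hx : IsIntegral A x) {f : A[X]} (hf : aeval x f = 0)
    (hf' : IsUnit (aeval x (derivative f))) : IsUnit (aeval x (derivative (minpoly A x))) := by
  obtain ⟨g, rfl⟩ := minpoly.isIntegrallyClosed_dvd hx hf
  rw [derivative_mul, map_add, map_mul, map_mul, minpoly.aeval, zero_mul, add_zero] at hf'
  exact isUnit_of_mul_isUnit_left hf'

theorem isUnramifiedAt_of_isUnit_aeval_derivative (A K L : Type*) {B : Type*} [CommRing A]
    [IsDedekindDomain A] [Field K] [Algebra A K] [IsFractionRing A K] [CommRing B]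
    [IsDedekindDomain B] [Field L] [Algebra B L] [IsFractionRing B L] [Algebra A B]
    [Module.IsTorsionFree A B] [Module.Finite A B] [Algebra K L] [Algebra A L] [IsScalarTower A K L]
    [IsScalarTower A B L] [FiniteDimensional K L] [Algebra.IsSeparable K L] {x : B}
    (hgen : Algebra.adjoin K {algebraMap B L x} = ⊤) {f : A[X]} (hf : aeval x f = 0)
    (hf' : IsUnit (aeval x (derivative f))) (Q : Ideal B) [Q.IsPrime] :
    Algebra.IsUnramifiedAt A Q := by
  have := isSeparable_fractionRing A K L B
  have hdiff : differentIdeal A B = ⊤ := Ideal.eq_top_of_isUnit_mem _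
    (aeval_derivative_mem_differentIdeal A K L x hgen)
    (isUnit_aeval_derivative_minpoly (Algebra.IsIntegral.isIntegral x) hf hf')
  rw [← not_dvd_differentIdeal_iff, hdiff, Ideal.dvd_iff_le, top_le_iff]
  exact Ideal.IsPrime.ne_top'

end Different

section SquareRoot

variable {K L : Type*} [Field K] [Field L] [Algebra K L]

theorem finiteDimensional_of_adjoin_eq_top {x : L} (hx : IsIntegral K x)
    (hgen : Algebra.adjoin K {x} = ⊤) : FiniteDimensional K L := by
  have := Algebra.finite_adjoin_simple_of_isIntegral hx
  rw [hgen] at this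
  exact Module.Finite.equiv Subalgebra.topEquiv.toLinearEquiv

theorem algebra_isSeparable_of_adjoin_eq_top {x : L} (hx : IsSeparable K x)
    (hgen : Algebra.adjoin K {x} = ⊤) : Algebra.IsSeparable K L := by
  have htop : IntermediateField.adjoin K {x} = ⊤ := IntermediateField.toSubalgebra_injective <|
    (IntermediateField.adjoin_simple_toSubalgebra_of_isAlgebraic
      hx.isIntegral.isAlgebraic).trans hgen
  have := (IntermediateField.isSeparable_adjoin_simple_iff_isSeparable K L).mpr hx
  rw [htop] at this
  exact .of_algHom K _ IntermediateField.topEquiv.symm.toAlgHom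

theorem isSeparable_of_sq_eq_algebraMap {a : K} {b : L} (h2 : (2 : K) ≠ 0) (ha : a ≠ 0)
    (hb : b ^ 2 = algebraMap K L a) : IsSeparable K b :=
  (separable_X_pow_sub_C (n := 2) a (mod_cast h2) ha).of_dvd (minpoly.dvd K b (by simp [hb]))

theorem exists_aeval_eq_zero_and_aeval_derivative_eq {R S : Type*} [CommRing R] [CommRing S]
    [IsDomain S] [IsIntegrallyClosed S] [Algebra R S] (h2 : (2 : S) ≠ 0) {α u : R} {b : S}
    (hb : b ^ 2 = algebraMap R S α) (hu : 4 ∣ u ^ 2 - α) :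
    ∃ γ : S, 2 * γ = b + algebraMap R S u ∧
      ∃ f : R[X], aeval γ f = 0 ∧ aeval γ (derivative f) = b := by
  obtain ⟨c, hc⟩ := hu
  replace hc : algebraMap R S u ^ 2 - b ^ 2 = 4 * algebraMap R S c := by
    rw [hb, ← map_pow, ← map_sub, hc, map_mul, map_ofNat]
  obtain ⟨γ, hγ⟩ : 2 ∣ b + algebraMap R S u :=
    dvd_of_sq_add_mul_add_sq_mul_eq_zero (p := -algebraMap R S u) (q := algebraMap R S c)
      (by linear_combination -hc)
  refine ⟨γ, hγ.symm, X ^ 2 - C u * X + C c, ?_, ?_⟩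
  · have : 2 ^ 2 * (γ ^ 2 - algebraMap R S u * γ + algebraMap R S c) = 0 := by
      linear_combination -hc - (2 * γ - algebraMap R S u + b) * hγ
    simpa [h2] using this
  · simp only [derivative_add, derivative_X_sq, derivative_C_mul, derivative_X, derivative_C,
      mul_one, add_zero, map_sub, map_mul, aeval_C, aeval_X, map_ofNat]
    linear_combination -hγ

theorem ramificationIdx'_eq_one_of_four_dvd_sq_sub {R S : Type*} [CommRing R] [IsDomain R]
    [IsDiscreteValuationRing R] [Algebra R K] [IsFractionRing R K] [Algebra R L]
    [IsScalarTower R K L] [FiniteDimensional K L] [Algebra.IsSeparable K L] [CommRing S]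
    [IsDedekindDomain S] [Algebra R S] [Module.IsTorsionFree R S] [Module.Finite R S] [Algebra S L]
    [IsScalarTower R S L] [IsFractionRing S L] (h2 : (2 : R) ≠ 0) {α u : R} (hα : IsUnit α) {b : S}
    (hb : b ^ 2 = algebraMap R S α) (hgen : Algebra.adjoin K {algebraMap S L b} = ⊤)
    (hu : 4 ∣ u ^ 2 - α) (Q : Ideal S) [Q.IsPrime] [Q.LiesOver (maximalIdeal R)] :
    (maximalIdeal R).ramificationIdx' Q = 1 := by
  have h2S : (2 : S) ≠ 0 := by
    rw [← map_ofNat (algebraMap R S) 2]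
    exact (map_ne_zero_iff _ (FaithfulSMul.algebraMap_injective R S)).mpr h2
  obtain ⟨γ, hγ, f, hf, hf'⟩ := exists_aeval_eq_zero_and_aeval_derivative_eq h2S hb hu
  have hgenγ : Algebra.adjoin K {algebraMap S L γ} = ⊤ := by
    rw [_root_.eq_top_iff, ← hgen]
    refine Algebra.adjoin_le (Set.singleton_subset_iff.mpr ?_)
    have hbγ : algebraMap S L b = 2 * algebraMap S L γ - algebraMap K L (algebraMap R K u) := by
      rw [← IsScalarTower.algebraMap_apply, IsScalarTower.algebraMap_apply R S L,
        ← map_ofNat (algebraMap S L) 2, ← map_mul, ← map_sub, hγ, add_sub_cancel_right]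
    rw [hbγ]
    exact sub_mem (mul_mem (ofNat_mem _ 2) (Algebra.self_mem_adjoin_singleton K _))
      (Subalgebra.algebraMap_mem _ _)
  have hbunit : IsUnit b := (isUnit_pow_iff two_ne_zero).mp (hb ▸ hα.map (algebraMap R S))
  have := isUnramifiedAt_of_isUnit_aeval_derivative R K L hgenγ hf (hf' ▸ hbunit) Q
  rw [Ideal.ramificationIdx'_eq_ramificationIdx _ _ (IsDiscreteValuationRing.not_a_field R),
    Ideal.ramificationIdx_eq_one]

end SquareRoot

section ValuationSubring

theorem bijective_algebraMap_of_valuationRing (R O K : Type*) [CommRing R] [IsDomain R]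
    [ValuationRing R] [CommRing O] [IsLocalRing O] [Field K] [Algebra R O] [Algebra R K]
    [Algebra O K] [IsScalarTower R O K] [IsFractionRing R K] [FaithfulSMul O K]
    [IsLocalHom (algebraMap R O)] : Function.Bijective (algebraMap R O) := by
  have h := bijective_rangeRestrict_comp_of_valuationRing (algebraMap R O) (algebraMap O K)
    (IsScalarTower.algebraMap_eq R O K).symm
  have hinj : Function.Injective (algebraMap O K).rangeRestrict := fun _ _ hxy =>
    FaithfulSMul.algebraMap_injective O K (congrArg Subtype.val hxy)
  rw [RingHom.coe_comp] at h
  exact ⟨h.1.of_comp, h.2.of_comp_left hinj⟩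

theorem isLocalization_atPrime_under_maximalIdeal (A O K : Type*) [CommRing A] [IsDedekindDomain A]
    [CommRing O] [IsLocalRing O] [Field K] [Algebra A O] [Algebra A K] [Algebra O K]
    [IsScalarTower A O K] [IsFractionRing A K] [FaithfulSMul O K] :
    IsLocalization.AtPrime O ((maximalIdeal O).under A) := by
  let P := (maximalIdeal O).under A
  let e : Localization.AtPrime P →ₐ[A] O :=
    IsLocalization.liftAlgHom (M := P.primeCompl) (f := Algebra.ofId A O)
      fun a => notMem_maximalIdeal.mp a.2
  let := e.toAlgebra
  let := ((algebraMap O K).comp e.toRingHom).toAlgebra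
  have : IsScalarTower (Localization.AtPrime P) O K := .of_algebraMap_eq fun _ => rfl
  have : IsScalarTower A (Localization.AtPrime P) K := .of_algebraMap_eq fun a => by
    rw [IsScalarTower.algebraMap_apply A O K, ← e.commutes]
    rfl
  have := IsFractionRing.isFractionRing_of_isDomain_of_isLocalization P.primeCompl
    (Localization.AtPrime P) K
  have : IsLocalHom (algebraMap (Localization.AtPrime P) O) := by
    refine ⟨fun x hx => ?_⟩
    obtain ⟨a, s, rfl⟩ := IsLocalization.exists_mk'_eq P.primeCompl x
    have ha : IsUnit (algebraMap A O a) := by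
      have := hx.mul (notMem_maximalIdeal.mp s.2)
      rwa [IsScalarTower.algebraMap_apply A (Localization.AtPrime P) O, ← map_mul,
        IsLocalization.mk'_spec, ← IsScalarTower.algebraMap_apply] at this
    exact (IsLocalization.AtPrime.isUnit_mk'_iff _ P a s).mpr (notMem_maximalIdeal.mpr ha)
  -- A valuation ring is maximal for domination among the local subrings of its fraction field.
  exact IsLocalization.isLocalization_of_algEquiv P.primeCompl
    (AlgEquiv.ofBijective e (bijective_algebraMap_of_valuationRing _ O K))

theorem perfectField_residueField_maximalIdeal (R : Type*) [CommRing R] [IsLocalRing R]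
    [PerfectField (ResidueField R)] : PerfectField (maximalIdeal R).ResidueField :=
  .of_ringEquiv (K := ResidueField R) (.ofBijective
    (algebraMap (ResidueField R) (maximalIdeal R).ResidueField)
    (Ideal.bijective_algebraMap_quotient_residueField (maximalIdeal R)))

theorem perfectField_residueField_of_isIntegral (R A O : Type*) [CommRing R] [IsLocalRing R]
    [PerfectField (ResidueField R)] [CommRing A] [CommRing O] [IsLocalRing O] [Algebra R A]
    [Algebra.IsIntegral R A] [Algebra A O] [Algebra R O] [IsScalarTower R A O]
    [IsLocalHom (algebraMap R O)] [IsLocalization.AtPrime O ((maximalIdeal O).under A)] :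
    PerfectField (ResidueField O) := by
  let q := (maximalIdeal O).under A
  have : q.LiesOver (maximalIdeal R) :=
    ⟨(maximalIdeal_comap (algebraMap R O)).symm.trans (Ideal.under_under _).symm⟩
  let := Localization.AtPrime.algebraOfLiesOver (maximalIdeal R) q
  have := perfectField_residueField_maximalIdeal R
  have : PerfectField q.ResidueField :=
    Algebra.IsAlgebraic.perfectField (maximalIdeal R).ResidueField
  exact .of_ringEquiv (ResidueField.mapEquiv
    (IsLocalization.algEquiv q.primeCompl (Localization.AtPrime q) O).toRingEquiv)

theorem isDiscreteValuationRing_and_perfectField_residueField (R F : Type*) {K : Type*} [CommRing R]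
    [IsDomain R] [IsDiscreteValuationRing R] [PerfectField (ResidueField R)] [Field F] [Algebra R F]
    [IsFractionRing R F] [Field K] [Algebra F K] [FiniteDimensional F K] [Algebra.IsSeparable F K]
    [Algebra R K] [IsScalarTower R F K] (O : ValuationSubring K) [Algebra R O]
    [IsScalarTower R O K] [IsLocalHom (algebraMap R O)] :
    IsDiscreteValuationRing O ∧ PerfectField (ResidueField O) := by
  let A := integralClosure R K
  have hAO (a : A) : (a : K) ∈ O := by
    obtain ⟨y, hy⟩ := IsIntegrallyClosed.isIntegral_iff.mp (IsIntegral.tower_top (A := O) a.2)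
    exact hy ▸ y.2
  let : Algebra A O := (A.val.toRingHom.codRestrict O.toSubring hAO).toAlgebra
  have : IsScalarTower A O K := .of_algebraMap_eq fun _ => rfl
  have : IsScalarTower R A O := .of_algebraMap_eq fun r => Subtype.ext <|
    (IsScalarTower.algebraMap_apply R O K r).symm
  have : IsDedekindDomain A := integralClosure.isDedekindDomain R F K
  have : IsFractionRing A K := integralClosure.isFractionRing_of_finite_extension F K
  have := isLocalization_atPrime_under_maximalIdeal A O K
  refine ⟨?_, perfectField_residueField_of_isIntegral R A O⟩
  refine IsLocalization.AtPrime.isDiscreteValuationRing_of_dedekind_domain A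
    (P := (maximalIdeal O).under A) (fun h => IsDiscreteValuationRing.not_a_field R ?_) O
  have := Module.IsTorsionFree.trans_faithfulSMul R F K
  calc maximalIdeal R = (maximalIdeal O).under R := (maximalIdeal_comap _).symm
    _ = ((maximalIdeal O).under A).under R := (Ideal.under_under _).symm
    _ = ⊥ := by rw [h, Ideal.under_bot]

theorem isDiscreteValuationRing_and_perfectField_residueField_of_padic {p : ℕ} [Fact p.Prime]
    {K : Type*} [Field K] [Algebra ℚ_[p] K] [FiniteDimensional ℚ_[p] K] (O : ValuationSubring K)
    (hO : ∀ x : ℚ_[p], algebraMap ℚ_[p] K x ∈ O ↔ ‖x‖ ≤ 1) :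
    IsDiscreteValuationRing O ∧ PerfectField (ResidueField O) := by
  let : Algebra ℤ_[p] K := ((algebraMap ℚ_[p] K).comp (algebraMap ℤ_[p] ℚ_[p])).toAlgebra
  let : Algebra ℤ_[p] O :=
    ((algebraMap ℤ_[p] K).codRestrict O.toSubring fun x => (hO x).mpr x.2).toAlgebra
  have : IsScalarTower ℤ_[p] ℚ_[p] K := .of_algebraMap_eq fun _ => rfl
  have : IsScalarTower ℤ_[p] O K := .of_algebraMap_eq fun _ => rfl
  have : IsLocalHom (algebraMap ℤ_[p] O) := ⟨fun x hx => by
    obtain ⟨y, hy⟩ := hx.exists_right_inv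
    have hxy : algebraMap ℚ_[p] K x⁻¹ = y := by
      rw [map_inv₀]
      exact inv_eq_of_mul_eq_one_right (congrArg Subtype.val hy)
    have hle : ‖(x : ℚ_[p])⁻¹‖ ≤ 1 := (hO _).mp (hxy ▸ y.2)
    have hx0 : x ≠ 0 := by
      rintro rfl
      simp at hy
    rw [norm_inv] at hle
    exact PadicInt.isUnit_iff.mpr <|
      le_antisymm x.2 ((inv_le_one₀ (norm_pos_iff.mpr (by simpa using hx0))).mp hle)⟩
  have : Finite (ResidueField ℤ_[p]) := .of_equiv _ PadicInt.residueField.symm.toEquiv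
  exact isDiscreteValuationRing_and_perfectField_residueField ℤ_[p] ℚ_[p] O

end ValuationSubring

theorem unramified_quadratic_ext_iff_unit_square_mod_four_general {O K L : Type*} [CommRing O]
    [IsDomain O] [IsDiscreteValuationRing O] [PerfectField (ResidueField O)] [Field K] [Algebra O K]
    [IsFractionRing O K] [Field L] [Algebra K L] [Algebra O L] [IsScalarTower O K L]
    (h2 : (2 : O) ≠ 0) {α : O} (hα : IsUnit α) {β : L} (hβ : β ^ 2 = algebraMap O L α)
    (hgen : Algebra.adjoin K {β} = ⊤) :
    (∀ Q : Ideal (integralClosure O L), Q.IsMaximal →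
        Q.comap (algebraMap O (integralClosure O L)) = maximalIdeal O →
        (maximalIdeal O).ramificationIdx' Q = 1) ↔
      ∃ u : O, IsUnit u ∧ 4 ∣ u ^ 2 - α := by
  let b : integralClosure O L := ⟨β, .of_pow two_pos (hβ ▸ isIntegral_algebraMap)⟩
  have hb : b ^ 2 = algebraMap O (integralClosure O L) α := Subtype.ext hβ
  have := Module.IsTorsionFree.trans_faithfulSMul O K L
  have h2K : (2 : K) ≠ 0 := by
    rw [← map_ofNat (algebraMap O K) 2]
    exact (map_ne_zero_iff _ (FaithfulSMul.algebraMap_injective O K)).mpr h2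
  have hβsep : IsSeparable K β := isSeparable_of_sq_eq_algebraMap (a := algebraMap O K α) h2K
    (hα.map (algebraMap O K)).ne_zero (hβ.trans (IsScalarTower.algebraMap_apply O K L α))
  have := finiteDimensional_of_adjoin_eq_top hβsep.isIntegral hgen
  have := algebra_isSeparable_of_adjoin_eq_top hβsep hgen
  have := integralClosure.isDedekindDomain O K L
  have := integralClosure.isFractionRing_of_finite_extension (A := O) K L
  have := IsIntegralClosure.finite O K L (integralClosure O L)
  refine ⟨fun h => exists_isUnit_four_dvd_sq_sub_of_ramificationIdx'_eq_one h2 hα hb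
    fun Q hQ hQO => h Q hQ hQO.over.symm, fun ⟨u, _, hu⟩ Q _ hQO => ?_⟩
  have : Q.LiesOver (maximalIdeal O) := ⟨hQO.symm⟩
  exact ramificationIdx'_eq_one_of_four_dvd_sq_sub (K := K) (L := L) h2 hα hb hgen hu Q

/-- Let `K` be a finite extension of `ℚ₂` with valuation ring `O`, and let `α ∈ O` be a unit
which is not a square in `K`. Then the quadratic extension `L = K(√α)` is unramified over `K`
(i.e. every maximal ideal of the integral closure of `O` in `L` lying over the maximal ideal
`m` of `O` has ramification index `1`) if and only if there is a unit `u ∈ O` with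
`u ^ 2 ≡ α (mod 4)`. -/
theorem unramified_quadratic_ext_iff_unit_square_mod_four
    (K : Type*) [Field K] [Algebra ℚ_[2] K] [FiniteDimensional ℚ_[2] K]
    (O : ValuationSubring K)
    (hO : ∀ x : ℚ_[2], algebraMap ℚ_[2] K x ∈ O ↔ ‖x‖ ≤ 1)
    (α : O) (hαunit : IsUnit α) (hαns : ∀ y : K, y ^ 2 ≠ (α : K))
    (L : Type*) [Field L] [Algebra K L] [Algebra O L] [IsScalarTower O K L]
    (β : L) (hβ : β ^ 2 = algebraMap K L (α : K))
    (hgen : Algebra.adjoin K {β} = ⊤) :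
    (∀ Q : Ideal (integralClosure O L), Q.IsMaximal →
        Q.comap (algebraMap O (integralClosure O L)) = IsLocalRing.maximalIdeal O →
        Ideal.ramificationIdx'
          (IsLocalRing.maximalIdeal O) Q = 1) ↔
      ∃ u : O, IsUnit u ∧ (4 : O) ∣ u ^ 2 - α := by
  have : CharZero K := charZero_of_injective_algebraMap (algebraMap ℚ_[2] K).injective
  obtain ⟨_, _⟩ := isDiscreteValuationRing_and_perfectField_residueField_of_padic O hO
  exact unramified_quadratic_ext_iff_unit_square_mod_four_general
    (fun h => two_ne_zero (congrArg Subtype.val h : (2 : K) = 0)) hαunit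
    (hβ.trans (IsScalarTower.algebraMap_apply O K L α).symm) hgen
end

section
/- Let K = ℚ₂(√−1), the extension of ℚ₂ generated by a square root of −1, with valuation ring O_K. A unit α ∈ O_K is a fourth power in K if and only if α ≡ 1 (mod (1 + √−1)⁷), i.e. if and only if (1 + √−1)⁷ divides α − 1 in O_K. -/
/-!
Put `π = 1 + √-1`, so that `π ^ 2` is associated to `2` and `K / ℚ₂` is totally ramified: the powers
`1, π` form a `ℤ₂`-basis of `O` and the residue field of `O` has two elements.

If `y = 1 + πz`, then `y ^ 4 - 1 = π ^ 4 · z(z + 1)(z - √-1)(z + 1 - √-1)`. Among the last four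
factors, two are divisible by `π`; they differ by a unit multiple of `π`, so that one of them is
divisible by `π ^ 2`.

Conversely, `O` is finite over the complete ring `ℤ₂`, hence Henselian, and `1 + 4t` is the square
of some `1 + 2ts` as soon as `π ∣ t`. An element `≡ 1 (mod π ^ 7)` has the form `1 + 4t` with
`π ^ 3 ∣ t`, and its square root `1 + 2ts` is again of the form `1 + 4t'` with `π ∣ t'`.
-/

open IsLocalRing Polynomial

section Completeness

variable {R : Type*} [CommRing R] [IsNoetherianRing R] (I : Ideal R) [IsAdicComplete I R]

theorem isAdicComplete_of_finite (M : Type*) [AddCommGroup M] [Module R M] [Module.Finite R M] :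
    IsAdicComplete I M := by
  have hausdorff : IsHausdorff I M := .of_le_jacobson I M (IsAdicComplete.le_jacobson_bot I)
  refine AdicCompletion.of_bijective_iff.mp ⟨AdicCompletion.of_injective I M, fun x ↦ ?_⟩
  obtain ⟨t, rfl⟩ := AdicCompletion.ofTensorProduct_surjective_of_finite I M x
  induction t with
  | zero => exact ⟨0, by simp⟩
  | tmul r m =>
    obtain ⟨r, rfl⟩ := AdicCompletion.of_surjective I R r
    refine ⟨r • m, ?_⟩
    rw [AdicCompletion.ofTensorProduct_tmul, map_smul]
    exact (algebraMap_smul (AdicCompletion I R) r _).symm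
  | add t u ht hu =>
    obtain ⟨a, ha⟩ := ht
    obtain ⟨b, hb⟩ := hu
    exact ⟨a + b, by rw [map_add, map_add, ha, hb]⟩

theorem henselianRing_map_of_finite (S : Type*) [CommRing S] [Algebra R S] [Module.Finite R S] :
    HenselianRing S (I.map (algebraMap R S)) :=
  have := isAdicComplete_of_finite I S
  have : IsAdicComplete (I.map (algebraMap R S)) S :=
    (IsAdicComplete.map_algebraMap_iff I S).mpr this
  inferInstance

end Completeness

section TotallyRamified

variable {R S : Type*} [CommRing R] [IsDomain R] [IsDiscreteValuationRing R] [CommRing S]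
  [Algebra R S] {ϖ : R} {π : S} {n : ℕ}

theorem dvd_of_dvd_algebraMap (hϖ : Irreducible ϖ) (hπ : ¬IsUnit π) {a : R}
    (h : π ∣ algebraMap R S a) : ϖ ∣ a := by
  rw [← Ideal.mem_span_singleton, ← hϖ.maximalIdeal_eq, mem_maximalIdeal, mem_nonunits_iff]
  exact fun ha ↦ hπ (isUnit_of_dvd_unit h (ha.map (algebraMap R S)))

variable [IsDomain S] [FaithfulSMul R S]

theorem dvd_coeff_of_dvd_sum_smul_pow (hϖ : Irreducible ϖ) (hπ : ¬IsUnit π)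
    (hϖπ : π ^ n ∣ algebraMap R S ϖ) {a : Fin n → R}
    (h : π ^ n ∣ ∑ k, a k • π ^ (k : ℕ)) (k : Fin n) : ϖ ∣ a k := by
  induction k using WellFoundedLT.induction with
  | ind k ih =>
    have hπ0 : π ≠ 0 := by
      rintro rfl
      rw [zero_pow k.pos.ne', zero_dvd_iff, FaithfulSMul.algebraMap_eq_zero_iff] at hϖπ
      exact hϖ.ne_zero hϖπ
    have dvd_others : π ^ (k + 1 : ℕ) ∣ ∑ l ∈ Finset.univ.erase k, a l • π ^ (l : ℕ) := by
      refine Finset.dvd_sum fun l hl ↦ ?_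
      rw [Algebra.smul_def]
      rcases (Finset.ne_of_mem_erase hl).lt_or_gt with hlk | hkl
      · exact dvd_mul_of_dvd_left
          ((pow_dvd_pow π k.isLt).trans (hϖπ.trans (map_dvd _ (ih l hlk)))) _
      · exact dvd_mul_of_dvd_right (pow_dvd_pow π hkl) _
    have dvd_term : π ^ (k + 1 : ℕ) ∣ a k • π ^ (k : ℕ) := by
      rw [← dvd_add_left dvd_others,
        Finset.add_sum_erase _ (fun l ↦ a l • π ^ (l : ℕ)) (Finset.mem_univ k)]
      exact (pow_dvd_pow π k.isLt).trans h
    rw [Algebra.smul_def, pow_succ', mul_dvd_mul_iff_right (pow_ne_zero _ hπ0)] at dvd_term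
    exact dvd_of_dvd_algebraMap hϖ hπ dvd_term

theorem mem_span_pow_of_irreducible_smul_mem (hϖ : Irreducible ϖ) (hπ : ¬IsUnit π)
    (hϖπ : π ^ n ∣ algebraMap R S ϖ) {x : S}
    (hx : ϖ • x ∈ Submodule.span R (Set.range fun k : Fin n ↦ π ^ (k : ℕ))) :
    x ∈ Submodule.span R (Set.range fun k : Fin n ↦ π ^ (k : ℕ)) := by
  rw [Submodule.mem_span_range_iff_exists_fun] at hx ⊢
  obtain ⟨a, ha⟩ := hx
  have ϖ_dvd : ∀ k, ϖ ∣ a k := dvd_coeff_of_dvd_sum_smul_pow hϖ hπ hϖπ <| by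
    rw [ha, Algebra.smul_def]
    exact dvd_mul_of_dvd_left hϖπ x
  choose b hb using ϖ_dvd
  have : Module.IsTorsionFree R S := FaithfulSMul.to_isTorsionFree R S
  refine ⟨b, smul_right_injective S hϖ.ne_zero ?_⟩
  simp only [← ha, hb, Finset.smul_sum, mul_smul]

theorem mem_span_pow_of_smul_mem (hϖ : Irreducible ϖ) (hπ : ¬IsUnit π)
    (hϖπ : π ^ n ∣ algebraMap R S ϖ) {r : R} (hr : r ≠ 0) {x : S}
    (hx : r • x ∈ Submodule.span R (Set.range fun k : Fin n ↦ π ^ (k : ℕ))) :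
    x ∈ Submodule.span R (Set.range fun k : Fin n ↦ π ^ (k : ℕ)) := by
  obtain ⟨m, u, rfl⟩ := IsDiscreteValuationRing.eq_unit_mul_pow_irreducible hr hϖ
  rw [mul_smul, ← Units.smul_def, Submodule.smul_mem_iff'] at hx
  clear hr
  induction m with
  | zero => simpa using hx
  | succ m ih =>
    rw [pow_succ', mul_smul] at hx
    exact ih (mem_span_pow_of_irreducible_smul_mem hϖ hπ hϖπ hx)

theorem span_pow_eq_top_of_span_fractionRing_eq_top (F : Type*) {L : Type*} [Field F] [Field L]
    [Algebra R F] [IsFractionRing R F] [Algebra F L] [Algebra S L] [FaithfulSMul S L]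
    [Algebra R L] [IsScalarTower R F L] [IsScalarTower R S L]
    (hϖ : Irreducible ϖ) (hπ : ¬IsUnit π) (hϖπ : π ^ n ∣ algebraMap R S ϖ)
    (hspan : Submodule.span F (Set.range fun k : Fin n ↦ algebraMap S L π ^ (k : ℕ)) = ⊤) :
    Submodule.span R (Set.range fun k : Fin n ↦ π ^ (k : ℕ)) = ⊤ := by
  refine Submodule.eq_top_iff'.mpr fun x ↦ ?_
  obtain ⟨r, hr⟩ := multiple_mem_span_of_mem_localization_span (nonZeroDivisors R) F _
    (algebraMap S L x) (hspan ▸ Submodule.mem_top)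
  have map_span : Submodule.span R (Set.range fun k : Fin n ↦ algebraMap S L π ^ (k : ℕ)) =
      (Submodule.span R (Set.range fun k : Fin n ↦ π ^ (k : ℕ))).map
        (IsScalarTower.toAlgHom R S L).toLinearMap := by
    rw [Submodule.map_span, ← Set.range_comp]
    simp [Function.comp_def]
  rw [map_span] at hr
  obtain ⟨y, hy, hyr⟩ := hr
  have hyx : y = (r : R) • x := FaithfulSMul.algebraMap_injective S L <| by
    simpa [Algebra.smul_def, Submonoid.smul_def, ← IsScalarTower.algebraMap_apply] using hyr
  exact mem_span_pow_of_smul_mem hϖ hπ hϖπ (nonZeroDivisors.coe_ne_zero r) (hyx ▸ hy)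

end TotallyRamified

theorem exists_dvd_sub_algebraMap_of_span_pow_eq_top {R S : Type*} [CommRing R] [CommRing S]
    [Algebra R S] {π : S} {n : ℕ}
    (hspan : Submodule.span R (Set.range fun k : Fin n ↦ π ^ (k : ℕ)) = ⊤) (z : S) :
    ∃ a : R, π ∣ z - algebraMap R S a := by
  have hz : z ∈ Submodule.span R (Set.range fun k : Fin n ↦ π ^ (k : ℕ)) :=
    hspan ▸ Submodule.mem_top
  induction hz using Submodule.span_induction with
  | mem x hx =>
    obtain ⟨⟨_ | k, hk⟩, rfl⟩ := hx
    · exact ⟨1, by simp⟩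
    · exact ⟨0, by simp [pow_succ']⟩
  | zero => exact ⟨0, by simp⟩
  | add x y _ _ hx hy =>
    obtain ⟨a, ha⟩ := hx
    obtain ⟨b, hb⟩ := hy
    exact ⟨a + b, by rw [map_add, add_sub_add_comm]; exact dvd_add ha hb⟩
  | smul r x _ hx =>
    obtain ⟨a, ha⟩ := hx
    exact ⟨r * a, by rw [Algebra.smul_def, map_mul, ← mul_sub]; exact ha.mul_left _⟩

theorem exists_sq_eq_one_add_four_mul {R : Type*} [CommRing R] {I : Ideal R} [HenselianRing R I]
    {t : R} (ht : t ^ 2 ∈ I) : ∃ s : R, (1 + 2 * (t * s)) ^ 2 = 1 + 4 * t := by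
  have root_mod : (X ^ 2 + X - C t).eval t ∈ I := by simpa using ht
  have simple_mod : IsUnit (Ideal.Quotient.mk I ((X ^ 2 + X - C t).derivative.eval t)) := by
    have : IsNilpotent (Ideal.Quotient.mk I (2 * t)) :=
      ⟨2, by rw [← map_pow, Ideal.Quotient.eq_zero_iff_mem, mul_pow]; exact I.mul_mem_left _ ht⟩
    simpa [one_add_one_eq_two] using this.isUnit_add_one
  obtain ⟨w, hw, w_sub_t_mem⟩ := HenselianRing.is_henselian _ (by monicity!) t root_mod simple_mod
  have hw : w * (1 + w) = t := by
    have : w ^ 2 + w - t = 0 := by simpa using hw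
    linear_combination this
  have w_sq_mem : w ^ 2 ∈ I := by
    rw [show w ^ 2 = -(w - t) by linear_combination hw]
    exact I.neg_mem w_sub_t_mem
  have isUnit_one_add : IsUnit (1 + w) := by
    have : IsUnit (w ^ 2 * -1 + 1) :=
      Ideal.mem_jacobson_bot.mp (HenselianRing.jac (I := I) w_sq_mem) (-1)
    exact isUnit_of_dvd_unit ⟨1 - w, by ring⟩ this
  obtain ⟨s, hs⟩ := isUnit_one_add.exists_right_inv
  have hts : t * s = w := by rw [← hw, mul_assoc, hs, mul_one]
  exact ⟨s, by rw [hts, ← hw]; ring⟩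

section FourthPowers

variable {R : Type*} [CommRing R]

theorem pow_three_dvd_mul_sub_mul {p u z : R} (hp : ∀ x : R, p ∣ x ∨ p ∣ x - 1) (hu : p ∣ u - 1)
    (hz : p ∣ z) : p ^ 3 ∣ z * (z - p * u) := by
  obtain ⟨t, rfl⟩ := hz
  have p_dvd : p ∣ t * (t - u) := by
    rcases hp t with ht | ht
    · exact ht.mul_right _
    · exact (sub_sub_sub_cancel_right t u 1 ▸ dvd_sub ht hu).mul_left _
  calc p ^ 3 = p ^ 2 * p := pow_succ p 2
    _ ∣ p ^ 2 * (t * (t - u)) := mul_dvd_mul_left _ p_dvd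
    _ = p * t * (p * t - p * u) := by ring

variable {i : R}

theorem one_add_sq_of_sq_eq_neg_one (hi : i ^ 2 = -1) : (1 + i) ^ 2 = 2 * i := by
  linear_combination hi

theorem one_add_sq_dvd_two (hi : i ^ 2 = -1) : (1 + i) ^ 2 ∣ 2 :=
  ⟨-i, by rw [one_add_sq_of_sq_eq_neg_one hi]; linear_combination 2 * hi⟩

theorem one_add_dvd_two (hi : i ^ 2 = -1) : 1 + i ∣ 2 :=
  (dvd_pow_self _ two_ne_zero).trans (one_add_sq_dvd_two hi)

theorem not_isUnit_one_add (hi : i ^ 2 = -1) (h2 : ¬IsUnit (2 : R)) : ¬IsUnit (1 + i) := fun h ↦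
  h2 (isUnit_of_mul_isUnit_left (one_add_sq_of_sq_eq_neg_one hi ▸ h.pow 2))

theorem pow_four_sub_one_eq_of_sub_one_eq (hi : i ^ 2 = -1) {y z : R}
    (hz : y - 1 = (1 + i) * z) :
    y ^ 4 - 1 =
      (1 + i) ^ 4 * (z * (z - (1 + i) * i) * ((z + 1) * (z + 1 - (1 + i) * 1))) := by
  have hy_add_one : y + 1 = (1 + i) * (z - (1 + i) * i) := by linear_combination hz + (2 + i) * hi
  have hy_add_i : y + i = (1 + i) * (z + 1) := by linear_combination hz
  have hy_sub_i : y - i = (1 + i) * (z + 1 - (1 + i) * 1) := by linear_combination hz + hi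
  calc y ^ 4 - 1 = (y - 1) * (y + 1) * ((y + i) * (y - i)) := by
        linear_combination (y ^ 2 - 1) * hi
    _ = _ := by rw [hz, hy_add_one, hy_add_i, hy_sub_i]; ring

theorem one_add_pow_seven_dvd_pow_four_sub_one (hi : i ^ 2 = -1)
    (hres : ∀ x : R, 1 + i ∣ x ∨ 1 + i ∣ x - 1) {y : R} (hy : 1 + i ∣ y - 1) :
    (1 + i) ^ 7 ∣ y ^ 4 - 1 := by
  obtain ⟨z, hz⟩ := hy
  rw [pow_four_sub_one_eq_of_sub_one_eq hi hz, pow_add _ 4 3]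
  refine mul_dvd_mul_left _ ?_
  rcases hres z with hz | hz
  · have hi_sub_one : 1 + i ∣ i - 1 := ⟨i, by linear_combination -hi⟩
    exact (pow_three_dvd_mul_sub_mul hres hi_sub_one hz).mul_right _
  · have hz_add_one : 1 + i ∣ z + 1 := by
      rw [show z + 1 = z - 1 + 2 by ring]
      exact dvd_add hz (one_add_dvd_two hi)
    exact (pow_three_dvd_mul_sub_mul hres (by simp) hz_add_one).mul_left _

theorem exists_pow_four_eq_of_one_add_pow_seven_dvd_sub_one {I : Ideal R} [HenselianRing R I]
    (h2 : 2 ∈ I) (hi : i ^ 2 = -1) {α : R} (hα : (1 + i) ^ 7 ∣ α - 1) : ∃ y, y ^ 4 = α := by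
  obtain ⟨β, hβ⟩ := hα
  have one_add_sq := one_add_sq_of_sq_eq_neg_one hi
  have one_add_pow_four : (1 + i) ^ 4 = -4 := by
    linear_combination ((1 + i) ^ 2 + 2 * i) * one_add_sq + 4 * hi
  have one_add_mul_sq_mem (x : R) : ((1 + i) * x) ^ 2 ∈ I := by
    rw [mul_pow, one_add_sq, mul_assoc]
    exact I.mul_mem_right _ h2
  obtain ⟨s, hs⟩ := exists_sq_eq_one_add_four_mul (one_add_mul_sq_mem (-(1 + i) ^ 2 * β))
  obtain ⟨r, hr⟩ := exists_sq_eq_one_add_four_mul (one_add_mul_sq_mem (-i * β * s))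
  set y := 1 + 2 * ((1 + i) * (-i * β * s) * r)
  refine ⟨y, ?_⟩
  calc y ^ 4 = (y ^ 2) ^ 2 := by ring
    _ = (1 + 2 * ((1 + i) * (-(1 + i) ^ 2 * β) * s)) ^ 2 := by rw [hr, one_add_sq]; ring
    _ = 1 + 4 * ((1 + i) * (-(1 + i) ^ 2 * β)) := hs
    _ = α := by linear_combination -(1 + i) ^ 3 * β * one_add_pow_four - hβ

theorem exists_pow_four_eq_iff_one_add_pow_seven_dvd {I : Ideal R} [HenselianRing R I]
    (h2 : 2 ∈ I) (hi : i ^ 2 = -1) (hres : ∀ x : R, 1 + i ∣ x ∨ 1 + i ∣ x - 1) {α : R}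
    (hα : IsUnit α) : (∃ y, y ^ 4 = α) ↔ (1 + i) ^ 7 ∣ α - 1 := by
  refine ⟨?_, exists_pow_four_eq_of_one_add_pow_seven_dvd_sub_one h2 hi⟩
  rintro ⟨y, rfl⟩
  rcases hres y with hy | hy
  · have : IsUnit (1 + i) := isUnit_of_dvd_unit hy ((isUnit_pow_iff four_ne_zero).mp hα)
    exact (this.pow 7).dvd
  · exact one_add_pow_seven_dvd_pow_four_sub_one hi hres hy

end FourthPowers

theorem exists_pow_eq_algebraMap_iff {R K : Type*} [CommRing R] [IsIntegrallyClosed R] [Field K]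
    [Algebra R K] [IsFractionRing R K] {n : ℕ} (hn : 0 < n) {a : R} :
    (∃ y : K, y ^ n = algebraMap R K a) ↔ ∃ y : R, y ^ n = a := by
  constructor
  · rintro ⟨y, hy⟩
    obtain ⟨x, rfl⟩ := IsIntegrallyClosed.exists_algebraMap_eq_of_isIntegral_pow (R := R) hn
      (hy ▸ isIntegral_algebraMap)
    exact ⟨x, FaithfulSMul.algebraMap_injective R K (by rw [map_pow, hy])⟩
  · rintro ⟨y, rfl⟩
    exact ⟨algebraMap R K y, (map_pow _ _ _).symm⟩

theorem span_range_pow_eq_top_of_adjoin_eq_top {R A : Type*} [CommRing R] [Ring A] [Algebra R A]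
    {x : A} {f : R[X]} (hf : f.Monic) (hfx : aeval x f = 0)
    (hgen : Algebra.adjoin R {x} = ⊤) :
    Submodule.span R (Set.range fun k : Fin f.natDegree ↦ x ^ (k : ℕ)) = ⊤ := by
  classical
  rw [← Algebra.top_toSubmodule, ← hgen, ← Submodule.span_range_natDegree_eq_adjoin hf hfx]
  congr 1
  ext y
  simp [Fin.exists_iff]

theorem span_one_add_pow_eq_top {R A : Type*} [CommRing R] [Nontrivial R] [CommRing A]
    [Algebra R A] {i : A} (hi : i ^ 2 = -1) (hgen : Algebra.adjoin R {i} = ⊤) :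
    Submodule.span R (Set.range fun k : Fin 2 ↦ (1 + i) ^ (k : ℕ)) = ⊤ := by
  have monic : (X ^ 2 - C 2 * X + C 2 : R[X]).Monic := by monicity!
  have natDegree_eq : (X ^ 2 - C 2 * X + C 2 : R[X]).natDegree = 2 := by compute_degree!
  have aeval_eq : aeval (1 + i) (X ^ 2 - C 2 * X + C 2 : R[X]) = 0 := by
    simp only [map_add, map_sub, map_mul, map_pow, aeval_X, map_ofNat]
    linear_combination hi
  have adjoin_one_add : Algebra.adjoin R {1 + i} = ⊤ := by
    rw [eq_top_iff, ← hgen]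
    refine Algebra.adjoin_le (Set.singleton_subset_iff.mpr ?_)
    simpa using sub_mem (Algebra.self_mem_adjoin_singleton R (1 + i)) (one_mem _)
  have := span_range_pow_eq_top_of_adjoin_eq_top monic aeval_eq adjoin_one_add
  rwa [natDegree_eq] at this

theorem two_dvd_or_two_dvd_sub_one_of_padicInt (a : ℤ_[2]) : 2 ∣ a ∨ 2 ∣ a - 1 := by
  obtain ⟨n, hn, ha⟩ := PadicInt.exists_mem_range (p := 2) a
  rw [PadicInt.maximalIdeal_eq_span_p, Ideal.mem_span_singleton] at ha
  interval_cases n <;> simp_all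

section PadicInt

variable {S : Type*} [CommRing S] [Algebra ℤ_[2] S] {i : S}

theorem one_add_dvd_or_dvd_sub_one (hi : i ^ 2 = -1)
    (hspan : Submodule.span ℤ_[2] (Set.range fun k : Fin 2 ↦ (1 + i) ^ (k : ℕ)) = ⊤) (z : S) :
    1 + i ∣ z ∨ 1 + i ∣ z - 1 := by
  obtain ⟨a, ha⟩ := exists_dvd_sub_algebraMap_of_span_pow_eq_top hspan z
  have dvd_of_two_dvd {b : ℤ_[2]} (hb : 2 ∣ b) : 1 + i ∣ algebraMap ℤ_[2] S b :=
    (one_add_dvd_two hi).trans (map_ofNat (algebraMap ℤ_[2] S) 2 ▸ map_dvd _ hb)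
  refine (two_dvd_or_two_dvd_sub_one_of_padicInt a).imp (fun h ↦ ?_) fun h ↦ ?_
  · simpa using dvd_add ha (dvd_of_two_dvd h)
  · simpa using dvd_add ha (dvd_of_two_dvd h)

variable [IsDomain S] {K : Type*} [Field K] [Algebra ℚ_[2] K] [Algebra ℤ_[2] K]
  [IsScalarTower ℤ_[2] ℚ_[2] K] [Algebra S K] [IsScalarTower ℤ_[2] S K]

theorem span_padicInt_one_add_pow_eq_top [FaithfulSMul S K] (h2 : ¬IsUnit (2 : S))
    (hi : i ^ 2 = -1) (hgen : Algebra.adjoin ℚ_[2] {algebraMap S K i} = ⊤) :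
    Submodule.span ℤ_[2] (Set.range fun k : Fin 2 ↦ (1 + i) ^ (k : ℕ)) = ⊤ := by
  have : FaithfulSMul ℤ_[2] K := .trans ℤ_[2] ℚ_[2] K
  have : FaithfulSMul ℤ_[2] S := .tower_bot ℤ_[2] S K
  refine span_pow_eq_top_of_span_fractionRing_eq_top ℚ_[2] (L := K) PadicInt.irreducible_p
    (not_isUnit_one_add hi h2) ?_ ?_
  · exact map_ofNat (algebraMap ℤ_[2] S) 2 ▸ one_add_sq_dvd_two hi
  · simpa using span_one_add_pow_eq_top (by rw [← map_pow, hi, map_neg, map_one]) hgen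

theorem exists_pow_four_eq_algebraMap_iff_one_add_pow_seven_dvd [IsIntegrallyClosed S]
    [IsFractionRing S K] (h2 : ¬IsUnit (2 : S)) (hi : i ^ 2 = -1)
    (hgen : Algebra.adjoin ℚ_[2] {algebraMap S K i} = ⊤) {α : S} (hα : IsUnit α) :
    (∃ y : K, y ^ 4 = algebraMap S K α) ↔ (1 + i) ^ 7 ∣ α - 1 := by
  have hspan := span_padicInt_one_add_pow_eq_top h2 hi hgen
  have : Module.Finite ℤ_[2] S := ⟨hspan ▸ Submodule.fg_span (Set.finite_range _)⟩
  have := henselianRing_map_of_finite (maximalIdeal ℤ_[2]) S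
  have two_mem : (2 : S) ∈ (maximalIdeal ℤ_[2]).map (algebraMap ℤ_[2] S) := by
    rw [PadicInt.maximalIdeal_eq_span_p, Ideal.map_span]
    exact Ideal.subset_span ⟨2, rfl, map_ofNat _ 2⟩
  exact (exists_pow_eq_algebraMap_iff four_pos).trans
    (exists_pow_four_eq_iff_one_add_pow_seven_dvd two_mem hi (one_add_dvd_or_dvd_sub_one hi hspan)
      hα)

end PadicInt

theorem not_isUnit_two_of_mem_iff_norm_le_one {K : Type*} [Field K] [Algebra ℚ_[2] K]
    {O : ValuationSubring K} (hO : ∀ x : ℚ_[2], algebraMap ℚ_[2] K x ∈ O ↔ ‖x‖ ≤ 1) :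
    ¬IsUnit (2 : O) := by
  intro h
  obtain ⟨u, hu⟩ := h.exists_right_inv
  have u_eq : (u : K) = algebraMap ℚ_[2] K 2⁻¹ := by
    rw [map_inv₀, map_ofNat]
    exact eq_inv_of_mul_eq_one_right (congrArg Subtype.val hu)
  have norm_le : ‖(2⁻¹ : ℚ_[2])‖ ≤ 1 := (hO _).mp (u_eq ▸ u.2)
  have norm_eq : ‖(2 : ℚ_[2])‖ = 2⁻¹ := by exact_mod_cast Padic.norm_p (p := 2)
  rw [norm_inv, norm_eq] at norm_le
  norm_num at norm_le

/-- Let `K = ℚ₂(√-1)` with valuation ring `O`.  A unit `α ∈ O` is a fourth power in `K` if and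
only if `(1 + √-1) ^ 7` divides `α - 1` in `O`. -/
theorem fourth_power_in_Q2i_iff_congruent_one
    (K : Type*) [Field K] [Algebra ℚ_[2] K] [FiniteDimensional ℚ_[2] K]
    (i : K) (hi : i ^ 2 = -1) (hKgen : Algebra.adjoin ℚ_[2] {i} = ⊤)
    (O : ValuationSubring K)
    (hO : ∀ x : ℚ_[2], algebraMap ℚ_[2] K x ∈ O ↔ ‖x‖ ≤ 1)
    (j : O) (hj : (j : K) = i)
    (α : O) (hαunit : IsUnit α) :
    (∃ y : K, y ^ 4 = (α : K)) ↔ (1 + j) ^ 7 ∣ α - 1 := by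
  let : Algebra ℤ_[2] K := Algebra.compHom K (algebraMap ℤ_[2] ℚ_[2])
  let : Algebra ℤ_[2] O :=
    ((algebraMap ℤ_[2] K).codRestrict O.toSubring fun a ↦ (hO a).2 a.2).toAlgebra
  have : IsScalarTower ℤ_[2] ℚ_[2] K := .of_algebraMap_eq fun _ ↦ rfl
  have : IsScalarTower ℤ_[2] O K := .of_algebraMap_eq fun _ ↦ rfl
  have hj_sq : j ^ 2 = -1 := Subtype.ext (by simp [hj, hi])
  exact exists_pow_four_eq_algebraMap_iff_one_add_pow_seven_dvd
    (not_isUnit_two_of_mem_iff_norm_le_one hO) hj_sq (by simpa [← hj] using hKgen) hαunit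
end

section
/- Let K = ℚ(√−3) with ring of integers O_K = ℤ[w] where w = (1+√−3)/2 is a 6th root of unity, and let α ∈ O_K be coprime to 6 (a 2-adic and 3-adic unit). Let L = K(⁶√α) be the field obtained from K by adjoining a root of X⁶ − α. Then every prime of L lying above 2 or above 3 is unramified over K if and only if both of the following hold: (1) α ≡ 1, w², or w⁴ (mod 4) (equivalently, α is congruent to a square modulo 4); and (2) α ≡ ±1 (mod (√−3)³) (equivalently, α is congruent to a cube modulo (√−3)³). -/
open NumberField

/-!
Write `6 = p * m` with `p ∈ {2, 3}`, let `ζ = w ^ m`, a primitive `p`-th root of unity, and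
`c = β ^ m`, so that `c ^ p = α`; the element `ζ - 1` generates the prime of `𝓞 K` above `p`.

If `α ≡ u ^ p (mod (ζ - 1) ^ p)`, then `y = (c - u) / (ζ - 1)` is integral: dividing
`c ^ p - u ^ p = ∏ (c - η * u)` by `(ζ - 1) ^ p` shows that `y` is a root of a monic polynomial.
An inertia element `σ` with `σ c = η * c` and `η ≠ 1` would move `y` by a unit multiple of `c`,
which is impossible as `c` is a unit at `p`. So `σ` fixes `c`, and then also `β`, because `m` is
prime to the residue characteristic.

Conversely `p`-th powers exhaust the residue field, so `α ≡ u ^ p (mod ζ - 1)` for some `u`. Then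
`c ≡ u (mod Q)`, whence `c ^ p - u ^ p ∈ Q ^ p`, for each prime `Q` above `p`; if `Q` is unramified,
this means that `(ζ - 1) ^ p` divides `α - u ^ p`.
-/

section PrimeIdeals

variable {R : Type*} [CommRing R] {p : ℕ} {x y : R}

theorem exists_pow_prime_sub_pow_prime_eq (hp : p.Prime) (x y : R) :
    ∃ r, x ^ p - y ^ p = (x - y) ^ p + p * (x - y) * r := by
  obtain ⟨r, hr⟩ := exists_add_pow_prime_eq hp (x - y) y
  rw [sub_add_cancel] at hr
  exact ⟨y * r, by linear_combination hr⟩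

theorem sub_mem_of_pow_sub_pow_mem (hp : p.Prime) {P : Ideal R} [P.IsPrime]
    (hpP : (p : R) ∈ P) (h : x ^ p - y ^ p ∈ P) : x - y ∈ P := by
  obtain ⟨r, hr⟩ := exists_pow_prime_sub_pow_prime_eq hp x y
  refine ‹P.IsPrime›.mem_of_pow_mem p ?_
  rw [← sub_eq_of_eq_add hr, mul_assoc]
  exact P.sub_mem h (P.mul_mem_right _ hpP)

theorem pow_sub_pow_mem_pow (hp : p.Prime) {I : Ideal R} (hpI : (p : R) ∈ I ^ (p - 1))
    (h : x - y ∈ I) : x ^ p - y ^ p ∈ I ^ p := by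
  obtain ⟨r, hr⟩ := exists_pow_prime_sub_pow_prime_eq hp x y
  have hI : I ^ p = I ^ (p - 1) * I := by rw [← pow_succ, Nat.sub_add_cancel hp.one_le]
  rw [hr]
  refine add_mem (Ideal.pow_mem_pow h p) (Ideal.mul_mem_right _ _ ?_)
  rw [hI]
  exact Ideal.mul_mem_mul hpI h

theorem exists_sub_pow_mem (hp : p.Prime) (P : Ideal R) [P.IsPrime] [Finite (R ⧸ P)]
    (hpP : (p : R) ∈ P) (a : R) : ∃ u, a - u ^ p ∈ P := by
  have hinj : Function.Injective fun x : R ⧸ P ↦ x ^ p := by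
    rintro ⟨x⟩ ⟨y⟩ h
    exact Ideal.Quotient.eq.2 <| sub_mem_of_pow_sub_pow_mem hp hpP <| Ideal.Quotient.eq.1 h
  obtain ⟨⟨u⟩, hu⟩ := Finite.injective_iff_surjective.1 hinj (Ideal.Quotient.mk P a)
  exact ⟨u, Ideal.Quotient.eq.1 hu.symm⟩

theorem eq_of_pow_eq_pow_of_sub_mem [IsDomain R] (P : Ideal R) [P.IsPrime] {m : ℕ}
    (hm : (m : R) ∉ P) (hy : y ∉ P) (hxy : x - y ∈ P) (h : x ^ m = y ^ m) : x = y := by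
  have hmk : Ideal.Quotient.mk P x = Ideal.Quotient.mk P y := Ideal.Quotient.eq.2 hxy
  have hgeom : ∑ i ∈ Finset.range m, x ^ i * y ^ (m - 1 - i) ∉ P := by
    rw [← Ideal.Quotient.eq_zero_iff_mem, RingHom.map_geom_sum₂, hmk, geom_sum₂_self,
      ← map_natCast (Ideal.Quotient.mk P), ← map_pow, ← map_mul, Ideal.Quotient.eq_zero_iff_mem]
    exact fun hmem ↦ (‹P.IsPrime›.mem_or_mem hmem).elim hm (hy ∘ ‹P.IsPrime›.mem_of_pow_mem _)
  have hprod := (Commute.all x y).geom_sum₂_mul m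
  rw [h, sub_self, mul_eq_zero] at hprod
  exact sub_eq_zero.1 (hprod.resolve_left fun h0 ↦ hgeom (h0 ▸ P.zero_mem))

end PrimeIdeals

section RootsOfUnity

variable {R : Type*} [CommRing R] [IsDomain R] {n p : ℕ} {ζ η b c u : R}

theorem sub_one_dvd_sub_one_of_mem_nthRootsFinset [NeZero n] (hζ : IsPrimitiveRoot ζ n)
    (hη : η ∈ Polynomial.nthRootsFinset n (1 : R)) : ζ - 1 ∣ η - 1 := by
  obtain ⟨i, -, rfl⟩ :=
    hζ.eq_pow_of_pow_eq_one ((Polynomial.mem_nthRootsFinset (NeZero.pos n) 1).1 hη)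
  exact sub_one_dvd_pow_sub_one ζ i

theorem associated_sub_one_sub_one (hp : p.Prime) (hζ : IsPrimitiveRoot ζ p)
    (hη : η ∈ Polynomial.nthRootsFinset p (1 : R)) (h1 : η ≠ 1) :
    Associated (ζ - 1) (η - 1) := by
  have : NeZero p := ⟨hp.ne_zero⟩
  obtain ⟨i, hi, rfl⟩ := hζ.eq_pow_of_pow_eq_one ((Polynomial.mem_nthRootsFinset hp.pos 1).1 hη)
  have hi0 : i ≠ 0 := by rintro rfl; exact h1 (pow_zero ζ)
  exact hζ.associated_sub_one_pow_sub_one_of_coprime (Nat.coprime_of_lt_prime hi0 hi hp).symm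

theorem sub_one_dvd_sub_of_sub_one_pow_dvd [IsIntegrallyClosed R] (hn : 1 < n)
    (hζ : IsPrimitiveRoot ζ n) (h : (ζ - 1) ^ n ∣ c ^ n - u ^ n) : ζ - 1 ∣ c - u := by
  have : NeZero n := ⟨by positivity⟩
  let φ := algebraMap R (FractionRing R)
  have hφ : Function.Injective φ := IsFractionRing.injective R (FractionRing R)
  have hφζ : φ (ζ - 1) ≠ 0 := (map_ne_zero_iff φ hφ).2 (sub_ne_zero.2 (hζ.ne_one hn))
  obtain ⟨r, hr⟩ := h
  choose! a ha using fun η (hη : η ∈ Polynomial.nthRootsFinset n (1 : R)) ↦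
    sub_one_dvd_sub_one_of_mem_nthRootsFinset hζ hη
  let y : FractionRing R := φ (c - u) / φ (ζ - 1)
  have hy : φ (c - u) = φ (ζ - 1) * y := (mul_div_cancel₀ _ hφζ).symm
  have hfactor (η) (hη : η ∈ Polynomial.nthRootsFinset n (1 : R)) :
      φ (c - η * u) = φ (ζ - 1) * (y - φ (a η * u)) := by
    rw [mul_sub, ← hy, ← map_mul, ← map_sub, ← mul_assoc, ← ha η hη]
    congr 1
    ring
  have hprod : ∏ η ∈ Polynomial.nthRootsFinset n (1 : R), (y - φ (a η * u)) = φ r := by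
    apply mul_left_cancel₀ (pow_ne_zero n hφζ)
    rw [← map_pow, ← map_mul, ← hr, hζ.pow_sub_pow_eq_prod_sub_mul c u (NeZero.pos n), map_prod,
      Finset.prod_congr rfl hfactor, Finset.prod_mul_distrib, Finset.prod_const,
      hζ.card_nthRootsFinset, map_pow]
  have hint : IsIntegral R y := by
    let P : Polynomial R :=
      ∏ η ∈ Polynomial.nthRootsFinset n (1 : R), (Polynomial.X - Polynomial.C (a η * u))
    refine IsIntegral.of_aeval_monic (p := P) (Polynomial.monic_prod_X_sub_C _ _) ?_ ?_
    · rw [Polynomial.natDegree_finsetProd_X_sub_C_eq_card, hζ.card_nthRootsFinset]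
      exact NeZero.ne n
    · simp only [P, map_prod, map_sub, Polynomial.aeval_X, Polynomial.aeval_C]
      exact hprod ▸ isIntegral_algebraMap
  obtain ⟨z, hz⟩ := IsIntegrallyClosed.algebraMap_eq_of_integral hint
  exact ⟨z, hφ (by rw [hy, map_mul, ← hz])⟩

theorem map_eq_self_of_sub_one_dvd_sub (hp : p.Prime) (hζ : IsPrimitiveRoot ζ p) {I : Ideal R}
    {σ : R →+* R} (hσ : ∀ x, σ x - x ∈ I) (hσζ : σ ζ = ζ) (hσu : σ u = u)
    (hc : c ∉ I) (hσc : σ (c ^ p) = c ^ p) (h : ζ - 1 ∣ c - u) : σ c = c := by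
  have : NeZero p := ⟨hp.ne_zero⟩
  have hζ0 : ζ - 1 ≠ 0 := sub_ne_zero.2 (hζ.ne_one hp.one_lt)
  obtain ⟨η, hη, hση⟩ : ∃ η ∈ Polynomial.nthRootsFinset p (1 : R), σ c - η * c = 0 := by
    rw [← Finset.prod_eq_zero_iff, ← hζ.pow_sub_pow_eq_prod_sub_mul _ _ hp.pos, ← map_pow, hσc,
      sub_self]
  rw [sub_eq_zero] at hση
  suffices η = 1 by rw [hση, this, one_mul]
  by_contra h1
  obtain ⟨v, hv⟩ := associated_sub_one_sub_one hp hζ hη h1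
  obtain ⟨y, hy⟩ := h
  have hσy : σ y - y = v * c := by
    have hσcu : σ c - u = (ζ - 1) * σ y := by simpa [hσζ, hσu] using congrArg σ hy
    apply mul_left_cancel₀ hζ0
    linear_combination hy - hσcu + hση - c * hv
  exact hc ((I.unit_mul_mem_iff_mem v.isUnit).1 (hσy ▸ hσ y))

theorem map_eq_self_of_sub_one_pow_dvd_pow_sub_pow [IsIntegrallyClosed R] (hp : p.Prime)
    (hζ : IsPrimitiveRoot ζ p) {P : Ideal R} [P.IsPrime] {m : ℕ} (hm : (m : R) ∉ P) (hb : b ∉ P)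
    {σ : R →+* R} (hσ : ∀ x, σ x - x ∈ P) (hσζ : σ ζ = ζ) (hσu : σ u = u)
    (hσb : σ (b ^ (p * m)) = b ^ (p * m)) (h : (ζ - 1) ^ p ∣ b ^ (p * m) - u ^ p) : σ b = b := by
  rw [mul_comm, pow_mul] at hσb h
  have hpow : σ (b ^ m) = b ^ m :=
    map_eq_self_of_sub_one_dvd_sub hp hζ hσ hσζ hσu (hb ∘ ‹P.IsPrime›.mem_of_pow_mem m) hσb
      (sub_one_dvd_sub_of_sub_one_pow_dvd hp.one_lt hζ h)
  exact eq_of_pow_eq_pow_of_sub_mem P hm hb (hσ b) ((map_pow σ b m).symm.trans hpow)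

theorem natCast_mem_pow_of_sub_one_mem (hp : p.Prime) (hζ : IsPrimitiveRoot ζ p) {I : Ideal R}
    (h : ζ - 1 ∈ I) : (p : R) ∈ I ^ (p - 1) := by
  obtain ⟨z, -, hz⟩ := hζ.self_sub_one_pow_dvd_order (k := p - 1) (Nat.sub_lt hp.pos one_pos)
  exact hz ▸ Ideal.mul_mem_left _ _ (Ideal.pow_mem_pow h _)

theorem sub_one_pow_dvd_sub_pow_congr (hp : p.Prime) (hζ : IsPrimitiveRoot ζ p) {a x y : R}
    (h : ζ - 1 ∣ x - y) : (ζ - 1) ^ p ∣ a - x ^ p ↔ (ζ - 1) ^ p ∣ a - y ^ p := by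
  have hxy : (ζ - 1) ^ p ∣ x ^ p - y ^ p := by
    simp only [← Ideal.mem_span_singleton, ← Ideal.span_singleton_pow] at h ⊢
    exact pow_sub_pow_mem_pow hp
      (natCast_mem_pow_of_sub_one_mem hp hζ (Ideal.mem_span_singleton_self _)) h
  rw [← sub_add_sub_cancel a (x ^ p) (y ^ p), dvd_add_left hxy]

theorem not_sub_one_dvd_of_sub_one_pow_dvd_sub_pow (hp : p.Prime) (hζ : IsPrimitiveRoot ζ p)
    (hζ1 : ¬IsUnit (ζ - 1)) {a x : R} (ha : IsCoprime a (p : R)) (h : (ζ - 1) ^ p ∣ a - x ^ p) :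
    ¬ζ - 1 ∣ x := by
  intro hx
  have hdvd_a : ζ - 1 ∣ a :=
    (dvd_sub_left (dvd_pow hx hp.ne_zero)).1 ((dvd_pow_self _ hp.ne_zero).trans h)
  have hdvd_p : ζ - 1 ∣ (p : R) := by
    rw [← Ideal.mem_span_singleton]
    exact Ideal.pow_le_self (Nat.sub_ne_zero_of_lt hp.one_lt)
      (natCast_mem_pow_of_sub_one_mem hp hζ (Ideal.mem_span_singleton_self _))
  exact hζ1 (ha.isUnit_of_dvd' hdvd_a hdvd_p)

end RootsOfUnity

section Ramification

variable {A B : Type*} [CommRing A] [CommRing B] [IsDedekindDomain A] [IsDedekindDomain B]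
  [Algebra A B] [FaithfulSMul A B]

theorem mem_pow_of_algebraMap_mem_pow {P : Ideal A} {Q : Ideal B} [P.IsPrime] [Q.IsPrime]
    [Q.LiesOver P] (hP : P ≠ ⊥) (he : Ideal.ramificationIdx' P Q = 1) {x : A} {n : ℕ}
    (h : algebraMap A B x ∈ Q ^ n) : x ∈ P ^ n := by
  rcases eq_or_ne x 0 with rfl | hx
  · exact zero_mem _
  have hQ : Q ≠ ⊥ := Ideal.ne_bot_of_liesOver_of_ne_bot hP Q
  have hmul := Ideal.IsDedekindDomain.emultiplicity_map_eq_ramificationIdx'_mul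
    (I := Ideal.span {x}) (by simpa using hx) (Ideal.prime_of_isPrime hP ‹_›).irreducible
    (Ideal.prime_of_isPrime hQ ‹_›).irreducible hQ
  rw [he, Nat.cast_one, one_mul, Ideal.map_span, Set.image_singleton] at hmul
  rw [← Ideal.dvd_span_singleton, pow_dvd_iff_le_emultiplicity] at h ⊢
  exact hmul ▸ h

theorem sub_pow_mem_pow_of_ramificationIdx'_eq_one {p : ℕ} (hp : p.Prime) {P : Ideal A}
    {Q : Ideal B} [P.IsPrime] [Q.IsPrime] [Q.LiesOver P] (hP : P ≠ ⊥)
    (he : Ideal.ramificationIdx' P Q = 1) (hpP : (p : A) ∈ P ^ (p - 1)) {a u : A} {c : B}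
    (hc : c ^ p = algebraMap A B a) (h : a - u ^ p ∈ P) : a - u ^ p ∈ P ^ p := by
  have hmap : (P ^ (p - 1)).map (algebraMap A B) ≤ Q ^ (p - 1) := by
    rw [Ideal.map_pow]
    exact Ideal.pow_right_mono (Ideal.map_le_iff_le_comap.2 (Ideal.over_def Q P).le) _
  have hpQ : (p : B) ∈ Q ^ (p - 1) := map_natCast (algebraMap A B) p ▸
    hmap (Ideal.mem_map_of_mem _ hpP)
  have hsub : algebraMap A B (a - u ^ p) = c ^ p - algebraMap A B u ^ p := by
    rw [map_sub, map_pow, hc]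
  refine mem_pow_of_algebraMap_mem_pow hP he ?_
  rw [hsub]
  refine pow_sub_pow_mem_pow hp hpQ <| sub_mem_of_pow_sub_pow_mem hp
    (Ideal.pow_le_self (Nat.sub_ne_zero_of_lt hp.one_lt) hpQ) ?_
  rw [← hsub, ← Ideal.mem_of_liesOver Q P]
  exact h

end Ramification

theorem isGalois_of_adjoin_root_eq_top {K L : Type*} [Field K] [PerfectField K] [Field L]
    [Algebra K L] {n : ℕ} [NeZero n] {ζ a : K} (hζ : IsPrimitiveRoot ζ n) {β : L}
    (hβ : β ^ n = algebraMap K L a) (hgen : Algebra.adjoin K {β} = ⊤) : IsGalois K L := by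
  have : (Polynomial.X ^ n - Polynomial.C a : Polynomial K).IsSplittingField K L := by
    constructor
    · rw [Polynomial.map_sub, Polynomial.map_pow, Polynomial.map_C, Polynomial.map_X]
      exact X_pow_sub_C_splits_of_isPrimitiveRoot
        (hζ.map_of_injective (algebraMap K L).injective) hβ
    · rw [eq_top_iff, ← hgen]
      refine Algebra.adjoin_mono (Set.singleton_subset_iff.2 ?_)
      rw [Polynomial.mem_rootSet_of_ne (Polynomial.X_pow_sub_C_ne_zero (NeZero.pos n) a)]
      simp [hβ]
  have := Normal.of_isSplittingField (F := K) (E := L) (Polynomial.X ^ n - Polynomial.C a)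
  exact ⟨⟩

theorem eq_one_of_apply_eq_of_adjoin_eq_top {R A : Type*} [CommSemiring R] [Semiring A]
    [Algebra R A] {x : A} (hx : Algebra.adjoin R {x} = ⊤) {σ : A ≃ₐ[R] A} (hσ : σ x = x) :
    σ = 1 := by
  have h : (σ : A →ₐ[R] A) = AlgHom.id R A :=
    AlgHom.ext_of_adjoin_eq_top hx (Set.eqOn_singleton.2 hσ)
  exact AlgEquiv.ext fun y ↦ DFunLike.congr_fun h y

section NumberField

variable {K L : Type*} [Field K] [NumberField K] [Field L] [NumberField L] [Algebra K L]

theorem ramificationIdx'_comap_eq_card_inertia [IsGalois K L] (Q : Ideal (𝓞 L)) [Q.IsPrime]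
    (hQ : Q ≠ ⊥) :
    Ideal.ramificationIdx' (Q.comap (algebraMap (𝓞 K) (𝓞 L))) Q =
      Nat.card (Q.inertia Gal(L/K)) := by
  have hP : Q.under (𝓞 K) ≠ ⊥ := Ideal.under_ne_bot _ hQ
  have : (Q.under (𝓞 K)).IsMaximal := Ideal.IsPrime.isMaximal inferInstance hP
  have : Finite (𝓞 K ⧸ Q.under (𝓞 K)) := Ideal.finiteQuotientOfFreeOfNeBot _ hP
  have : Finite (Q.under (𝓞 K)).ResidueField := Finite.of_surjective _
    (Ideal.bijective_algebraMap_quotient_residueField (Q.under (𝓞 K))).2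
  rw [Ideal.card_inertia_eq_ramificationIdxIn (Q.under (𝓞 K)) Q,
    Ideal.ramificationIdxIn_eq_ramificationIdx (Q.under (𝓞 K)) Q Gal(L/K)]
  exact Ideal.ramificationIdx'_eq_ramificationIdx (Q.under (𝓞 K)) Q hP

variable {p m : ℕ} {α u : 𝓞 K}

theorem ramificationIdx'_comap_eq_one_of_sub_one_pow_dvd (hp : p.Prime) (hpm : p.Coprime m)
    {ω : 𝓞 K} (hω : IsPrimitiveRoot ω (p * m)) (hα : IsCoprime α (p : 𝓞 K)) {b : 𝓞 L}
    (hb : b ^ (p * m) = algebraMap (𝓞 K) (𝓞 L) α) (hgen : Algebra.adjoin K {(b : L)} = ⊤)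
    (h : (ω ^ m - 1) ^ p ∣ α - u ^ p) (Q : Ideal (𝓞 L)) [Q.IsPrime] (hpQ : (p : 𝓞 L) ∈ Q) :
    Ideal.ramificationIdx' (Q.comap (algebraMap (𝓞 K) (𝓞 L))) Q = 1 := by
  have : NeZero (p * m) := ⟨mul_ne_zero hp.ne_zero fun hm ↦ hp.ne_one <| by simpa [hm] using hpm⟩
  have hQ : Q ≠ ⊥ := by
    rintro rfl
    exact hp.ne_zero (by simpa using hpQ)
  have hmQ : (m : 𝓞 L) ∉ Q := Ideal.IsPrime.notMem_of_isCoprime_of_mem hpm.cast hpQ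
  have hbQ : b ∉ Q := by
    refine Ideal.IsPrime.notMem_of_isCoprime_of_mem (IsCoprime.symm ?_) hpQ
    rw [← IsCoprime.pow_left_iff (NeZero.pos (p * m)), hb]
    simpa using hα.map (algebraMap (𝓞 K) (𝓞 L))
  have : IsGalois K L := isGalois_of_adjoin_root_eq_top (a := (α : K))
    (hω.map_of_injective RingOfIntegers.coe_injective) (congrArg (algebraMap (𝓞 L) L) hb) hgen
  have hζ : IsPrimitiveRoot (algebraMap (𝓞 K) (𝓞 L) (ω ^ m)) p :=
    (hω.pow (NeZero.pos _) (mul_comm p m)).map_of_injective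
      (FaithfulSMul.algebraMap_injective (𝓞 K) (𝓞 L))
  have hdvd : (algebraMap (𝓞 K) (𝓞 L) (ω ^ m) - 1) ^ p ∣
      b ^ (p * m) - algebraMap (𝓞 K) (𝓞 L) u ^ p := by
    rw [hb]
    simpa using map_dvd (algebraMap (𝓞 K) (𝓞 L)) h
  rw [ramificationIdx'_comap_eq_card_inertia Q hQ, Subgroup.card_eq_one, eq_bot_iff]
  intro σ hσ
  have hσb : σ • b = b := map_eq_self_of_sub_one_pow_dvd_pow_sub_pow hp hζ hmQ hbQ
    (σ := MulSemiringAction.toRingHom Gal(L/K) (𝓞 L) σ) hσ (smul_algebraMap σ _)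
    (smul_algebraMap σ u) (hb ▸ smul_algebraMap σ α) hdvd
  exact Subgroup.mem_bot.2 <|
    eq_one_of_apply_eq_of_adjoin_eq_top hgen (congrArg (algebraMap (𝓞 L) L) hσb)

theorem exists_sub_one_pow_dvd_of_ramificationIdx'_eq_one (hp : p.Prime) {ζ : 𝓞 K}
    (hζ : IsPrimitiveRoot ζ p) (hζ1 : Prime (ζ - 1)) {c : 𝓞 L}
    (hc : c ^ p = algebraMap (𝓞 K) (𝓞 L) α)
    (H : ∀ Q : Ideal (𝓞 L), Q.IsPrime → (p : 𝓞 L) ∈ Q →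
      Ideal.ramificationIdx' (Q.comap (algebraMap (𝓞 K) (𝓞 L))) Q = 1) :
    ∃ u, (ζ - 1) ^ p ∣ α - u ^ p := by
  let P : Ideal (𝓞 K) := Ideal.span {ζ - 1}
  have hP : P ≠ ⊥ := by simpa [P] using hζ1.ne_zero
  have : P.IsPrime := (Ideal.span_singleton_prime hζ1.ne_zero).2 hζ1
  have : P.IsMaximal := Ideal.IsPrime.isMaximal ‹_› hP
  have : Finite (𝓞 K ⧸ P) := Ideal.finiteQuotientOfFreeOfNeBot P hP
  have hpP : (p : 𝓞 K) ∈ P ^ (p - 1) :=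
    natCast_mem_pow_of_sub_one_mem hp hζ (Ideal.mem_span_singleton_self _)
  have hpP1 : (p : 𝓞 K) ∈ P := Ideal.pow_le_self (Nat.sub_ne_zero_of_lt hp.one_lt) hpP
  obtain ⟨Q, _, _⟩ := Ideal.exists_maximal_ideal_liesOver_of_isIntegral (S := 𝓞 L) P
  have he : Ideal.ramificationIdx' P Q = 1 := by
    rw [Ideal.over_def Q P]
    refine H Q inferInstance ?_
    simpa using (Ideal.mem_of_liesOver Q P _).1 hpP1
  obtain ⟨u, hu⟩ := exists_sub_pow_mem hp P hpP1 α
  refine ⟨u, ?_⟩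
  rw [← Ideal.mem_span_singleton, ← Ideal.span_singleton_pow]
  exact sub_pow_mem_pow_of_ramificationIdx'_eq_one hp hP he hpP hc hu

theorem forall_ramificationIdx'_comap_eq_one_iff (hp : p.Prime) (hpm : p.Coprime m)
    {ω : 𝓞 K} (hω : IsPrimitiveRoot ω (p * m)) (hω1 : Prime (ω ^ m - 1))
    (hα : IsCoprime α (p : 𝓞 K)) {b : 𝓞 L}
    (hb : b ^ (p * m) = algebraMap (𝓞 K) (𝓞 L) α) (hgen : Algebra.adjoin K {(b : L)} = ⊤) :
    (∀ Q : Ideal (𝓞 L), Q.IsPrime → (p : 𝓞 L) ∈ Q →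
      Ideal.ramificationIdx' (Q.comap (algebraMap (𝓞 K) (𝓞 L))) Q = 1) ↔
    ∃ u, (ω ^ m - 1) ^ p ∣ α - u ^ p := by
  constructor
  · have hm : m ≠ 0 := fun hm ↦ hp.ne_one (by simpa [hm] using hpm)
    exact exists_sub_one_pow_dvd_of_ramificationIdx'_eq_one hp
      (hω.pow (Nat.mul_pos hp.pos hm.pos) (mul_comm p m)) hω1 (c := b ^ m)
      (by rw [← pow_mul, mul_comm, hb])
  · rintro ⟨u, hu⟩ Q _ hpQ
    exact ramificationIdx'_comap_eq_one_of_sub_one_pow_dvd hp hpm hω hα hb hgen hu Q hpQ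

end NumberField

section Eisenstein

theorem isPrimitiveRoot_six_iff {R : Type*} [CommRing R] [IsDomain R] [NeZero ((6 : ℕ) : R)]
    {w : R} : IsPrimitiveRoot w 6 ↔ w ^ 2 = w - 1 := by
  rw [← Polynomial.isRoot_cyclotomic_iff, Polynomial.cyclotomic_six, ← sub_eq_zero,
    sub_sub_eq_add_sub]
  simp [Polynomial.IsRoot, add_sub_right_comm]

theorem isCyclotomicExtension_of_finrank_eq_totient {K : Type*} [Field K] [NumberField K] {n : ℕ}
    [NeZero n] {ζ : K} (hζ : IsPrimitiveRoot ζ n) (hK : Module.finrank ℚ K = n.totient) :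
    IsCyclotomicExtension {n} ℚ K := by
  have : IsCyclotomicExtension {n} ℚ (IntermediateField.adjoin ℚ {ζ}) :=
    hζ.intermediateField_adjoin_isCyclotomicExtension ℚ
  have hrank : Module.finrank ℚ (IntermediateField.adjoin ℚ {ζ}) = n.totient :=
    IsCyclotomicExtension.finrank (IntermediateField.adjoin ℚ {ζ})
      (Polynomial.cyclotomic.irreducible_rat (NeZero.pos n))
  have htop : IntermediateField.adjoin ℚ {ζ} = ⊤ :=
    IntermediateField.eq_of_le_of_finrank_eq le_top <| by
      rw [hrank, IntermediateField.finrank_top', hK]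
  exact IsCyclotomicExtension.equiv {n} ℚ _ (h := this)
    ((IntermediateField.equivOfEq htop).trans IntermediateField.topEquiv)

theorem prime_of_forall_dvd_or_exists_dvd_sub_unit {R : Type*} [CommRing R] {π : R} (h0 : π ≠ 0)
    (h1 : ¬IsUnit π) (h : ∀ x, π ∣ x ∨ ∃ v : Rˣ, π ∣ x - v) : Prime π := by
  refine ⟨h0, h1, fun x y hxy ↦ (h x).imp_right ?_⟩
  rintro ⟨v, hv⟩
  rw [← v.isUnit.dvd_mul_left]
  simpa [sub_mul] using dvd_sub hxy (hv.mul_right y)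

variable {K : Type*} [Field K] [NumberField K] {w α : 𝓞 K}

theorem not_isUnit_natCast_ringOfIntegers {n : ℕ} (hn : n ≠ 1) : ¬IsUnit (n : 𝓞 K) := by
  rw [← Ideal.span_singleton_eq_top, ← Ideal.absNorm_eq_one_iff, Ideal.absNorm_span_natCast]
  simp [hn, Module.finrank_pos.ne']

theorem exists_eq_intCast_add_intCast_mul (hK : Module.finrank ℚ K = 2) (hw : IsPrimitiveRoot w 6)
    (x : 𝓞 K) : ∃ a b : ℤ, x = a + b * w := by
  have hwK : IsPrimitiveRoot (w : K) 6 := hw.map_of_injective RingOfIntegers.coe_injective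
  have : IsCyclotomicExtension {6} ℚ K := isCyclotomicExtension_of_finrank_eq_totient hwK hK
  obtain ⟨f, hf, rfl⟩ := hwK.integralPowerBasis.exists_eq_aeval x
  rw [hwK.integralPowerBasis_dim] at hf
  obtain ⟨b, a, rfl⟩ := Polynomial.exists_eq_X_add_C_of_natDegree_le_one (Nat.le_of_lt_succ hf)
  refine ⟨a, b, ?_⟩
  have hgen : hwK.toInteger = w := RingOfIntegers.ext rfl
  simp [hgen, add_comm]

theorem two_dvd_or_dvd_sub (hK : Module.finrank ℚ K = 2) (hw : IsPrimitiveRoot w 6) (x : 𝓞 K) :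
    2 ∣ x ∨ 2 ∣ x - 1 ∨ 2 ∣ x - w ∨ 2 ∣ x - w ^ 2 := by
  obtain ⟨a, b, rfl⟩ := exists_eq_intCast_add_intCast_mul hK hw x
  rcases Int.even_or_odd' a with ⟨c, rfl | rfl⟩ <;> rcases Int.even_or_odd' b with ⟨d, rfl | rfl⟩
  · exact .inl ⟨c + d * w, by push_cast; ring⟩
  · exact .inr <| .inr <| .inl ⟨c + d * w, by push_cast; ring⟩
  · exact .inr <| .inl ⟨c + d * w, by push_cast; ring⟩
  · refine .inr <| .inr <| .inr ⟨c + d * w + 1, ?_⟩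
    rw [isPrimitiveRoot_six_iff.1 hw]
    push_cast
    ring

theorem prime_pow_three_sub_one (hK : Module.finrank ℚ K = 2) (hw : IsPrimitiveRoot w 6) :
    Prime (w ^ 3 - 1) := by
  have hζ : IsPrimitiveRoot (w ^ 3) 2 := hw.pow (by norm_num) rfl
  have h2 : w ^ 3 - 1 = -2 := by linear_combination hζ.eq_neg_one_of_two_right
  rw [h2, (Associated.refl (2 : 𝓞 K)).neg_left.prime_iff]
  obtain ⟨v, rfl⟩ : IsUnit w := hw.isUnit (by norm_num)
  refine prime_of_forall_dvd_or_exists_dvd_sub_unit two_ne_zero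
    (mod_cast not_isUnit_natCast_ringOfIntegers (K := K) (n := 2) (by norm_num)) fun x ↦ ?_
  rcases two_dvd_or_dvd_sub hK hw x with h | h | h | h
  · exact .inl h
  · exact .inr ⟨1, h⟩
  · exact .inr ⟨v, h⟩
  · exact .inr ⟨v ^ 2, h⟩

theorem prime_sq_sub_one (hK : Module.finrank ℚ K = 2) (hw : IsPrimitiveRoot w 6) :
    Prime (w ^ 2 - 1) := by
  have hζ : IsPrimitiveRoot ((w ^ 2 : 𝓞 K) : K) 3 :=
    (hw.pow (by norm_num) rfl).map_of_injective RingOfIntegers.coe_injective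
  have : IsCyclotomicExtension {3} ℚ K := isCyclotomicExtension_of_finrank_eq_totient hζ hK
  exact hζ.zeta_sub_one_prime'

theorem sq_sub_one_dvd_or_dvd_sub_one_or_dvd_add_one (hK : Module.finrank ℚ K = 2)
    (hw : IsPrimitiveRoot w 6) (x : 𝓞 K) :
    w ^ 2 - 1 ∣ x ∨ w ^ 2 - 1 ∣ x - 1 ∨ w ^ 2 - 1 ∣ x + 1 := by
  have hζ : IsPrimitiveRoot ((w ^ 2 : 𝓞 K) : K) 3 :=
    (hw.pow (by norm_num) rfl).map_of_injective RingOfIntegers.coe_injective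
  have : IsCyclotomicExtension {3} ℚ K := isCyclotomicExtension_of_finrank_eq_totient hζ hK
  exact IsCyclotomicExtension.Rat.Three.lambda_dvd_or_dvd_sub_one_or_dvd_add_one hζ x

theorem exists_pow_three_sub_one_sq_dvd_iff (hK : Module.finrank ℚ K = 2)
    (hw : IsPrimitiveRoot w 6) (hα : IsCoprime α 2) :
    (∃ u, (w ^ 3 - 1) ^ 2 ∣ α - u ^ 2) ↔ 4 ∣ α - 1 ∨ 4 ∣ α - w ^ 2 ∨ 4 ∣ α - w ^ 4 := by
  have hζ : IsPrimitiveRoot (w ^ 3) 2 := hw.pow (by norm_num) rfl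
  have h2 : w ^ 3 - 1 = -2 := by linear_combination hζ.eq_neg_one_of_two_right
  have h4 : (w ^ 3 - 1) ^ 2 = 4 := by rw [h2]; norm_num
  have hcongr {u v : 𝓞 K} (huv : 2 ∣ u - v) (hu : (w ^ 3 - 1) ^ 2 ∣ α - u ^ 2) :
      4 ∣ α - v ^ 2 := by
    rw [← h4]
    rwa [← sub_one_pow_dvd_sub_pow_congr Nat.prime_two hζ (by rwa [h2, neg_dvd])]
  constructor
  · rintro ⟨u, hu⟩
    rcases two_dvd_or_dvd_sub hK hw u with h | h | h | h
    · exact absurd (by rwa [h2, neg_dvd]) <|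
        not_sub_one_dvd_of_sub_one_pow_dvd_sub_pow Nat.prime_two hζ
          (prime_pow_three_sub_one hK hw).not_isUnit (mod_cast hα) hu
    · exact .inl (by simpa using hcongr h hu)
    · exact .inr (.inl (hcongr h hu))
    · exact .inr (.inr (by simpa [← pow_mul] using hcongr h hu))
  · rw [h4]
    rintro (h | h | h)
    · exact ⟨1, by simpa using h⟩
    · exact ⟨w, h⟩
    · exact ⟨w ^ 2, by rwa [← pow_mul]⟩

theorem exists_sq_sub_one_pow_three_dvd_iff (hK : Module.finrank ℚ K = 2)
    (hw : IsPrimitiveRoot w 6) (hα : IsCoprime α 3) :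
    (∃ u, (w ^ 2 - 1) ^ 3 ∣ α - u ^ 3) ↔
      (2 * w - 1) ^ 3 ∣ α - 1 ∨ (2 * w - 1) ^ 3 ∣ α + 1 := by
  have hζ : IsPrimitiveRoot (w ^ 2) 3 := hw.pow (by norm_num) rfl
  have hassoc : Associated ((2 * w - 1) ^ 3) ((w ^ 2 - 1) ^ 3) := by
    obtain ⟨v, hv⟩ : IsUnit w := hw.isUnit (by norm_num)
    refine Associated.pow_pow ⟨v, ?_⟩
    rw [hv]
    linear_combination isPrimitiveRoot_six_iff.1 hw
  have hneg : α - (-1) ^ 3 = α + 1 := by ring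
  rw [hassoc.dvd_iff_dvd_left, hassoc.dvd_iff_dvd_left]
  constructor
  · rintro ⟨u, hu⟩
    have hcongr {v : 𝓞 K} (huv : w ^ 2 - 1 ∣ u - v) : (w ^ 2 - 1) ^ 3 ∣ α - v ^ 3 :=
      (sub_one_pow_dvd_sub_pow_congr Nat.prime_three hζ huv).1 hu
    rcases sq_sub_one_dvd_or_dvd_sub_one_or_dvd_add_one hK hw u with h | h | h
    · exact absurd h <| not_sub_one_dvd_of_sub_one_pow_dvd_sub_pow Nat.prime_three hζ
        (prime_sq_sub_one hK hw).not_isUnit hα hu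
    · exact .inl (by simpa using hcongr h)
    · exact .inr (hneg ▸ hcongr (by rwa [sub_neg_eq_add]))
  · rintro (h | h)
    · exact ⟨1, by simpa using h⟩
    · exact ⟨-1, hneg ▸ h⟩

end Eisenstein

/-- Let `K = ℚ(√-3)` with ring of integers `O_K = ℤ[w]`, `w = (1+√-3)/2`, and let `α ∈ O_K` be
coprime to `6`.  Let `L = K(⁶√α)` be obtained by adjoining a root `β` of `X ^ 6 - α`.  Then
every prime of `L` above `2` or `3` is unramified over `K` if and only if
`α ≡ 1, w², w⁴ (mod 4)` and `α ≡ ±1 (mod (√-3)³)`. -/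
theorem unramified_sextic_ext_over_Q_sqrt_neg_three_iff
    (K : Type) [Field K] [NumberField K]
    (s : K) (hs : s ^ 2 = -3) (hK : Module.finrank ℚ K = 2)
    (t : 𝓞 K) (ht : (t : K) = s)
    (w : 𝓞 K) (hw : (w : K) = (1 + s) / 2)
    (α : 𝓞 K) (hα : IsCoprime α 6)
    (L : Type) [Field L] [Algebra K L] [NumberField L]
    (β : L) (hβ : β ^ 6 = algebraMap K L (α : K))
    (hgen : Algebra.adjoin K {β} = ⊤) :
    (∀ Q : Ideal (𝓞 L), Q.IsPrime → ((2 : 𝓞 L) ∈ Q ∨ (3 : 𝓞 L) ∈ Q) →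
        Ideal.ramificationIdx'
          (Q.comap (algebraMap (𝓞 K) (𝓞 L))) Q = 1) ↔
      (((4 : 𝓞 K) ∣ α - 1 ∨ (4 : 𝓞 K) ∣ α - w ^ 2 ∨ (4 : 𝓞 K) ∣ α - w ^ 4) ∧
        (t ^ 3 ∣ α - 1 ∨ t ^ 3 ∣ α + 1)) := by
  have hwK : IsPrimitiveRoot (w : K) 6 :=
    isPrimitiveRoot_six_iff.2 (by rw [hw]; linear_combination hs / 4)
  have hw6 : IsPrimitiveRoot w 6 := hwK.of_map_of_injective RingOfIntegers.coe_injective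
  have htw : t = 2 * w - 1 := RingOfIntegers.ext <| by
    simp only [map_sub, map_mul, map_ofNat, map_one, hw, ht]
    ring
  have h6 : IsCoprime α (2 * 3) := by norm_num [hα]
  obtain ⟨b, rfl⟩ : ∃ b : 𝓞 L, (b : L) = β :=
    ⟨⟨β, .of_pow (n := 6) (by norm_num) (hβ ▸ α.isIntegral_coe.algebraMap)⟩, rfl⟩
  have hb : b ^ 6 = algebraMap (𝓞 K) (𝓞 L) α := RingOfIntegers.ext hβ
  have htwo := forall_ramificationIdx'_comap_eq_one_iff Nat.prime_two (m := 3) (by norm_num) hw6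
    (prime_pow_three_sub_one hK hw6) (mod_cast h6.of_mul_right_left) hb hgen
  have hthree := forall_ramificationIdx'_comap_eq_one_iff Nat.prime_three (m := 2) (by norm_num)
    hw6 (prime_sq_sub_one hK hw6) (mod_cast h6.of_mul_right_right) hb hgen
  simp only [or_imp, forall_and]
  rw [htw]
  exact and_congr
    (htwo.trans (exists_pow_three_sub_one_sq_dvd_iff hK hw6 h6.of_mul_right_left))
    (hthree.trans (exists_sq_sub_one_pow_three_dvd_iff hK hw6 h6.of_mul_right_right))
end

section
/- Let K = ℚ(√−3) and let u, v ∈ O_K^× be units of its ring of integers. Then the set of points (x : y : z) in the projective plane ℙ²(K) satisfying x³ + u·y³ + v·z³ = 0 is finite, and its cardinality is either 3 or 9. -/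
open NumberField

/-!
Write `ω` for a primitive cube root of unity and `λ = ω - 1`. The engine is a descent for coprime
`A + B + C = 0` in `ℤ[ω]` with `A * B * C` a unit times `d ^ 3`. Each of `A, B, C` is then a unit
times a cube; if `λ ∣ d`, congruences modulo `λ ^ 2` turn the relation into `x ^ 3 = b ^ 3 + c ^ 3`
up to a unit, and the three linear factors of `b ^ 3 + c ^ 3`, divided by `λ` and multiplied by
suitable powers of `ω`, form a triple of the same kind whose `d` has lost a factor `λ`. Hence
`a ^ 3 + b ^ 3 = w * c ^ 3`, `w` a unit, has only solutions with `a * b * c = 0` in the fraction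
field `K`.

If `x ^ 3 + u * y ^ 3 + v * z ^ 3 = 0` with `x * y * z ≠ 0`, the three terms `A, B, C` satisfy
`A + B + C = 0` with product a unit times a cube, and their discrete Fourier transforms
`A + ω * B + ω ^ 2 * C` and `A + ω ^ 2 * B + ω * C` have cubes whose sum is again a unit times a
cube. So one of them vanishes, which forces `(A : B : C) = (1 : ω : ω ^ 2)` or
`(1 : ω ^ 2 : ω)`. The points are thus counted by cube roots in `K` of units `± ω ^ k`, of which
there are three if `3 ∣ k` and none otherwise.
-/

theorem cube_add_cube_eq_mul {R : Type*} [CommRing R] {ω : R} (hω : ω ^ 2 + ω + 1 = 0) (a b : R) :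
    a ^ 3 + b ^ 3 = (a + b) * (a + ω * b) * (a + ω ^ 2 * b) := by
  linear_combination (-(a + b) * (a * b + (ω - 1) * b ^ 2)) * hω

theorem sq_add_self_add_one_eq_zero {R : Type*} [CommRing R] [IsDomain R] {ω : R}
    (hω : IsPrimitiveRoot ω 3) : ω ^ 2 + ω + 1 = 0 := by
  simpa [Polynomial.cyclotomic_three] using hω.isRoot_cyclotomic (by decide)

section CubicTriple

variable {R : Type*} [CommRing R] {d A B C : R}

/-- A zero-sum triple `A + B + C = 0` of pairwise coprime elements whose product is `d ^ 3` up to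
a unit: the data carried along the descent. Coprimality of one pair implies that of the others. -/
structure IsCubicTriple (d A B C : R) : Prop where
  add_eq_zero : A + B + C = 0
  isCoprime : IsCoprime A B
  associated : Associated (d ^ 3) (A * B * C)

namespace IsCubicTriple

theorem rotate (h : IsCubicTriple d A B C) : IsCubicTriple d B C A where
  add_eq_zero := by linear_combination h.add_eq_zero
  isCoprime := by
    rw [show C = -A + B * (-1) by linear_combination h.add_eq_zero]
    exact h.isCoprime.symm.neg_right.add_mul_left_right (-1)
  associated := by
    rw [show B * C * A = A * B * C by ring]
    exact h.associated

theorem exists_associated_cube [IsDomain R] [IsPrincipalIdealRing R] (h : IsCubicTriple d A B C) :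
    ∃ X, Associated (X ^ 3) A :=
  exists_associated_pow_of_associated_pow_mul
    (h.isCoprime.mul_right h.rotate.rotate.isCoprime.symm) (mul_assoc A B C ▸ h.associated)

end IsCubicTriple

end CubicTriple

section Eisenstein

open IsCyclotomicExtension.Rat.Three

attribute [local instance] IsCyclotomicExtension.Rat.three_pid

variable {K : Type*} [Field K] [NumberField K] [IsCyclotomicExtension {3} ℚ K]
  {ζ : K} (hζ : IsPrimitiveRoot ζ 3)

local notation "ω" => IsPrimitiveRoot.toInteger hζ
local notation "λ" => (IsPrimitiveRoot.toInteger hζ - 1)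

theorem toInteger_sub_one_dvd_three : λ ∣ 3 := by
  exact_mod_cast hζ.toInteger_sub_one_dvd_prime'

theorem toInteger_sub_one_not_dvd_one : ¬ λ ∣ 1 :=
  fun h ↦ hζ.zeta_sub_one_prime'.not_isUnit (isUnit_of_dvd_one h)

theorem toInteger_sub_one_cube_not_dvd_three : ¬ λ ^ 3 ∣ 3 := by
  have hp := hζ.zeta_sub_one_prime'
  have h3 : (3 : 𝓞 K) ∣ λ ^ 2 := ⟨-ω, by
    linear_combination sq_add_self_add_one_eq_zero hζ.toInteger_isPrimitiveRoot⟩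
  exact fun h ↦ absurd ((pow_dvd_pow_iff hp.ne_zero hp.not_isUnit).1 (h.trans h3)) (by norm_num)

theorem exists_pow_four_dvd_cube_sub {a : 𝓞 K} (ha : ¬ λ ∣ a) :
    ∃ e : ℤˣ, λ ^ 4 ∣ a ^ 3 - ((e : ℤ) : 𝓞 K) := by
  rcases lambda_pow_four_dvd_cube_sub_one_or_add_one_of_lambda_not_dvd hζ ha with h | h
  · exact ⟨1, by simpa using h⟩
  · exact ⟨-1, by simpa using h⟩

theorem pow_four_dvd_cube_add_cube {a b : 𝓞 K} (hb : ¬ λ ∣ b) (h : λ ∣ a ^ 3 + b ^ 3) :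
    λ ^ 4 ∣ a ^ 3 + b ^ 3 := by
  have ha : ¬ λ ∣ a := fun ha ↦ hb (hζ.zeta_sub_one_prime'.dvd_of_dvd_pow
    ((dvd_add_right (dvd_pow ha three_ne_zero)).1 h))
  have h2 : ¬ λ ∣ 2 := fun h2 ↦ toInteger_sub_one_not_dvd_one hζ <| by
    convert! dvd_sub (toInteger_sub_one_dvd_three hζ) h2 using 1
    norm_num
  obtain ⟨e, he⟩ := exists_pow_four_dvd_cube_sub hζ ha
  obtain ⟨f, hf⟩ := exists_pow_four_dvd_cube_sub hζ hb
  have hef : λ ^ 4 ∣ a ^ 3 + b ^ 3 - ((e + f : ℤ) : 𝓞 K) := by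
    convert! dvd_add he hf using 1
    push_cast
    ring
  have hsum : λ ∣ ((e + f : ℤ) : 𝓞 K) :=
    (dvd_sub_right h).1 ((dvd_pow_self _ four_ne_zero).trans hef)
  have hsigns : ∀ e f : ℤˣ, (e + f : ℤ) = 0 ∨ (e + f : ℤ) ∣ 2 := by decide
  rcases hsigns e f with h0 | hdvd
  · simpa [h0] using hef
  · exact absurd (hsum.trans (by exact_mod_cast Int.cast_dvd_cast _ _ hdvd)) h2

theorem exists_associated_cube_eq_unit_mul_cube {b : 𝓞 K} (u : (𝓞 K)ˣ) (hb : ¬ λ ∣ b) (n : ℤ)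
    (h : λ ^ 2 ∣ u * b ^ 3 - n) : ∃ b', Associated b b' ∧ b' ^ 3 = u * b ^ 3 := by
  obtain ⟨e, he⟩ := exists_pow_four_dvd_cube_sub hζ hb
  have he2 : λ ^ 2 ∣ b ^ 3 - ((e : ℤ) : 𝓞 K) := (pow_dvd_pow _ (by norm_num)).trans he
  have hee : ((e : ℤ) : 𝓞 K) * ((e : ℤ) : 𝓞 K) = 1 := by
    exact_mod_cast congrArg (Int.cast (R := 𝓞 K)) (Int.units_coe_mul_self e)
  have hu : u = 1 ∨ u = -1 := by
    refine eq_one_or_neg_one_of_unit_of_congruent hζ u ⟨n * e, ?_⟩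
    convert! (dvd_sub h (he2.mul_left (u : 𝓞 K))).mul_left ((e : ℤ) : 𝓞 K) using 1
    push_cast
    linear_combination (-(u : 𝓞 K)) * hee
  rcases hu with rfl | rfl
  · exact ⟨b, .refl b, by simp⟩
  · exact ⟨-b, (Associated.refl b).neg_right, by simp [Odd.neg_pow (n := 3) (by decide)]⟩

theorem cube_add_cube_add_cube_ne_zero_of_not_dvd {a b c : 𝓞 K} (ha : ¬ λ ∣ a) (hb : ¬ λ ∣ b)
    (hc : ¬ λ ∣ c) : a ^ 3 + b ^ 3 + c ^ 3 ≠ 0 := by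
  intro h
  obtain ⟨e, he⟩ := exists_pow_four_dvd_cube_sub hζ ha
  obtain ⟨f, hf⟩ := exists_pow_four_dvd_cube_sub hζ hb
  obtain ⟨g, hg⟩ := exists_pow_four_dvd_cube_sub hζ hc
  have hsum : λ ^ 4 ∣ ((e + f + g : ℤ) : 𝓞 K) := by
    convert! (dvd_add (dvd_add he hf) hg).neg_right using 1
    push_cast
    linear_combination h
  have hsigns : ∀ e f g : ℤˣ, (e + f + g : ℤ) ∣ 3 := by decide
  refine toInteger_sub_one_cube_not_dvd_three hζ
    ((pow_dvd_pow _ (by norm_num)).trans (hsum.trans ?_))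
  exact_mod_cast Int.cast_dvd_cast _ _ (hsigns e f g)

theorem cube_add_cube_ne_unit_mul_cube_of_not_dvd {a b c : 𝓞 K} (w : (𝓞 K)ˣ) (ha : ¬ λ ∣ a)
    (hb : ¬ λ ∣ b) (hc : ¬ λ ∣ c) : a ^ 3 + b ^ 3 ≠ w * c ^ 3 := by
  intro h
  obtain ⟨e, he⟩ := exists_pow_four_dvd_cube_sub hζ ha
  obtain ⟨f, hf⟩ := exists_pow_four_dvd_cube_sub hζ hb
  have hef : λ ^ 4 ∣ w * c ^ 3 - ((e + f : ℤ) : 𝓞 K) := by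
    convert! dvd_add he hf using 1
    push_cast
    linear_combination -h
  obtain ⟨c', hcc', hc'⟩ := exists_associated_cube_eq_unit_mul_cube hζ w hc (e + f)
    ((pow_dvd_pow _ (by norm_num)).trans hef)
  refine cube_add_cube_add_cube_ne_zero_of_not_dvd hζ ha hb (c := -c') ?_ ?_
  · rwa [dvd_neg, ← hcc'.dvd_iff_dvd_right]
  · linear_combination h - hc'

namespace IsCubicTriple

theorem exists_of_cube_add_cube {a b d : 𝓞 K} (hab : IsCoprime a b)
    (h : Associated ((λ * d) ^ 3) (a ^ 3 + b ^ 3)) : ∃ A B C, IsCubicTriple d A B C := by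
  have hp := hζ.zeta_sub_one_prime'
  have hω := sq_add_self_add_one_eq_zero hζ.toInteger_isPrimitiveRoot
  have hω3 := hζ.toInteger_cube_eq_one
  obtain ⟨A, hA⟩ : λ ∣ a + b := by
    refine hp.dvd_of_dvd_pow (n := 3) ?_
    have h3 : λ ∣ a ^ 3 + b ^ 3 :=
      ((dvd_mul_right _ _).trans (dvd_pow_self _ three_ne_zero)).trans h.dvd
    convert! dvd_add h3 ((toInteger_sub_one_dvd_three hζ).mul_right (a * b * (a + b))) using 1
    ring
  have hωab : a + ω * b = λ * (A + b) := by linear_combination hA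
  have hω2ab : a + ω ^ 2 * b = λ * (A - ω ^ 2 * b) := by
    linear_combination hA + λ * b * hω
  have hprod : a ^ 3 + b ^ 3 = λ ^ 3 * (A * (ω * (A + b)) * (ω ^ 2 * A - ω * b)) := by
    rw [cube_add_cube_eq_mul hω, hA, hωab, hω2ab]
    linear_combination (-λ ^ 3 * A ^ 2 * (A + b)) * hω3
  have hAb : IsCoprime A b := by
    have h := hab.add_mul_left_left 1
    rw [mul_one, hA] at h
    exact h.of_mul_left_right
  have hAAb : IsCoprime A (A + b) := by
    simpa [add_comm] using hAb.add_mul_left_right 1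
  refine ⟨A, ω * (A + b), ω ^ 2 * A - ω * b, ⟨by linear_combination A * hω, ?_, ?_⟩⟩
  · exact (isCoprime_mul_unit_left_right (.of_pow_eq_one hω3 three_ne_zero) _ _).2 hAAb
  · rw [hprod, mul_pow] at h
    exact h.of_mul_left (Associated.refl _) (pow_ne_zero 3 hp.ne_zero)

theorem exists_of_unit_mul_cube_add_cube {b c d : 𝓞 K} (u : (𝓞 K)ˣ) (hbc : IsCoprime b c)
    (h : Associated ((λ * d) ^ 3) (u * b ^ 3 + c ^ 3)) :
    λ ∣ d ∧ ∃ A B C, IsCubicTriple d A B C := by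
  have hp := hζ.zeta_sub_one_prime'
  have hlam3 : λ ^ 3 ∣ u * b ^ 3 + c ^ 3 := (Dvd.intro _ (mul_pow _ _ 3).symm).trans h.dvd
  have hlam : λ ∣ u * b ^ 3 + c ^ 3 := (dvd_pow_self _ three_ne_zero).trans hlam3
  have hb : ¬ λ ∣ b := fun hb ↦ hp.not_isUnit <| hbc.isUnit_of_dvd' hb <|
    hp.dvd_of_dvd_pow ((dvd_add_right ((dvd_pow hb three_ne_zero).mul_left _)).1 hlam)
  have hc : ¬ λ ∣ c := fun hc ↦ hb <| hp.dvd_of_dvd_pow <|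
    Units.dvd_mul_left.1 ((dvd_add_left (dvd_pow hc three_ne_zero)).1 hlam)
  obtain ⟨e, he⟩ := exists_pow_four_dvd_cube_sub hζ hc
  have hlam2 : λ ^ 2 ∣ u * b ^ 3 + c ^ 3 := (pow_dvd_pow _ (by norm_num)).trans hlam3
  have he2 : λ ^ 2 ∣ c ^ 3 - ((e : ℤ) : 𝓞 K) := (pow_dvd_pow _ (by norm_num)).trans he
  obtain ⟨b', hbb', hb'⟩ := exists_associated_cube_eq_unit_mul_cube hζ u hb (-e) <| by
    convert! dvd_sub hlam2 he2 using 1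
    push_cast
    ring
  rw [← hb'] at h hlam
  refine ⟨?_, exists_of_cube_add_cube hζ ?_ h⟩
  · have hlam4 := (pow_four_dvd_cube_add_cube hζ hc hlam).trans h.symm.dvd
    rw [mul_pow, pow_succ, mul_dvd_mul_iff_left (pow_ne_zero 3 hp.ne_zero)] at hlam4
    exact hp.dvd_of_dvd_pow hlam4
  · exact hbc.of_isCoprime_of_dvd_left hbb'.symm.dvd

theorem exists_of_dvd_fst {d A B C : 𝓞 K} (h : IsCubicTriple d A B C) (hA : λ ∣ A) :
    ∃ d' A' B' C', IsCubicTriple d' A' B' C' ∧ λ ∣ d' ∧ λ * d' ∣ d := by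
  obtain ⟨X, hX⟩ := h.exists_associated_cube
  obtain ⟨Y, v, rfl⟩ := h.rotate.exists_associated_cube
  obtain ⟨Z, w, rfl⟩ := h.rotate.rotate.exists_associated_cube
  obtain ⟨x, rfl⟩ : λ ∣ X := hζ.zeta_sub_one_prime'.dvd_of_dvd_pow (hA.trans hX.symm.dvd)
  have hYZ : IsCoprime Y Z := (IsCoprime.pow_iff three_pos three_pos).1 <|
    h.rotate.isCoprime.of_mul_left_left.of_mul_right_left
  have hsum : Associated ((λ * x) ^ 3) (↑(v * w⁻¹) * Y ^ 3 + Z ^ 3) := by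
    refine hX.trans ⟨-w⁻¹, ?_⟩
    push_cast
    linear_combination (-(↑w⁻¹ : 𝓞 K)) * h.add_eq_zero + Z ^ 3 * w.mul_inv
  have hxd : λ * x ∣ d := by
    rw [← IsIntegrallyClosed.pow_dvd_pow_iff three_ne_zero, h.associated.dvd_iff_dvd_right]
    exact hX.dvd.trans ((dvd_mul_right A _).mul_right _)
  obtain ⟨hx, A', B', C', h'⟩ := exists_of_unit_mul_cube_add_cube hζ _ hYZ hsum
  exact ⟨x, A', B', C', h', hx, hxd⟩

theorem exists_of_dvd {d A B C : 𝓞 K} (h : IsCubicTriple d A B C) (hd : λ ∣ d) :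
    ∃ d' A' B' C', IsCubicTriple d' A' B' C' ∧ λ ∣ d' ∧ λ * d' ∣ d := by
  have hp := hζ.zeta_sub_one_prime'
  have hABC : λ ∣ A * B * C := (hd.trans (dvd_pow_self d three_ne_zero)).trans h.associated.dvd
  rcases hp.dvd_or_dvd hABC with hAB | hC
  · rcases hp.dvd_or_dvd hAB with hA | hB
    · exact h.exists_of_dvd_fst hζ hA
    · exact h.rotate.exists_of_dvd_fst hζ hB
  · exact h.rotate.rotate.exists_of_dvd_fst hζ hC

theorem pow_dvd {d A B C : 𝓞 K} (h : IsCubicTriple d A B C) (hd : λ ∣ d) (n : ℕ) : λ ^ n ∣ d := by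
  induction n generalizing d A B C with
  | zero => simp
  | succ n ih =>
    obtain ⟨d', A', B', C', h', hd', hdvd⟩ := h.exists_of_dvd hζ hd
    rw [pow_succ']
    exact (mul_dvd_mul_left _ (ih h' hd')).trans hdvd

theorem eq_zero_of_dvd {d A B C : 𝓞 K} (h : IsCubicTriple d A B C) (hd : λ ∣ d) : d = 0 := by
  by_contra h0
  obtain ⟨n, hn⟩ := FiniteMultiplicity.of_prime_left hζ.zeta_sub_one_prime' h0
  exact hn (h.pow_dvd hζ hd (n + 1))

end IsCubicTriple

include hζ in
theorem mul_eq_zero_of_cube_add_cube_of_isCoprime {a b c : 𝓞 K} (w : (𝓞 K)ˣ)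
    (hac : IsCoprime a c) (h : a ^ 3 + b ^ 3 = w * c ^ 3) : a * b * c = 0 := by
  have hp := hζ.zeta_sub_one_prime'
  by_cases hd : λ ∣ a * b * c
  · refine IsCubicTriple.eq_zero_of_dvd (A := a ^ 3) (B := -w * c ^ 3) (C := b ^ 3) hζ
      ⟨by linear_combination h, ?_, ?_⟩ hd
    · exact (isCoprime_mul_unit_left_right w.isUnit.neg _ _).2 hac.pow
    · exact ⟨-w, by push_cast; ring⟩
  · simp only [hp.dvd_mul, not_or] at hd
    exact absurd h (cube_add_cube_ne_unit_mul_cube_of_not_dvd hζ w hd.1.1 hd.1.2 hd.2)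

include hζ in
theorem mul_eq_zero_of_cube_add_cube {a b c : K} (w : (𝓞 K)ˣ) (h : a ^ 3 + b ^ 3 = w * c ^ 3) :
    a * b * c = 0 := by
  by_cases hc : c = 0
  · simp [hc]
  obtain ⟨p, q, hpq, hac⟩ := IsFractionRing.exists_reduced_fraction (A := 𝓞 K) (a / c)
  rw [IsFractionRing.mk'_eq_div] at hac
  have hq : algebraMap (𝓞 K) K q ≠ 0 := by simp
  have hp : algebraMap (𝓞 K) K p = a / c * algebraMap (𝓞 K) K q := by
    rw [← hac, div_mul_cancel₀ _ hq]
  have hr : (b / c * algebraMap (𝓞 K) K q) ^ 3 = algebraMap (𝓞 K) K (w * q ^ 3 - p ^ 3) := by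
    simp only [map_sub, map_mul, map_pow, hp]
    field_simp
    linear_combination h
  obtain ⟨r, hbc⟩ := IsIntegrallyClosed.exists_algebraMap_eq_of_isIntegral_pow three_pos
    (hr ▸ isIntegral_algebraMap)
  have hpqr : p ^ 3 + r ^ 3 = w * (q : 𝓞 K) ^ 3 := by
    rw [← hbc, ← map_pow] at hr
    linear_combination FaithfulSMul.algebraMap_injective (𝓞 K) K hr
  have hzero := congrArg (algebraMap (𝓞 K) K)
    (mul_eq_zero_of_cube_add_cube_of_isCoprime hζ w hpq.isCoprime hpqr)
  simpa [hp, hbc, hc, mul_assoc] using hzero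

end Eisenstein

section ZeroSum

variable {F : Type*} [Field F] {ζ : F}

theorem eq_mul_of_add_mul_add_mul_eq_zero (hζ : IsPrimitiveRoot ζ 3) {A B C : F}
    (hsum : A + B + C = 0) (htwist : A + ζ * B + ζ ^ 2 * C = 0) : B = ζ * A ∧ C = ζ ^ 2 * A := by
  have hζ1 : ζ * (ζ - 1) ≠ 0 := mul_ne_zero (hζ.ne_zero three_ne_zero)
    (sub_ne_zero.2 (hζ.ne_one (by decide)))
  have hrel := sq_add_self_add_one_eq_zero hζ
  have hB : B = ζ * A := by
    refine mul_left_cancel₀ hζ1 ?_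
    linear_combination ζ ^ 2 * hsum - htwist - (ζ - 1) * A * hrel
  exact ⟨hB, by linear_combination hsum - hB - A * hrel⟩

end ZeroSum

section Cyclotomic

variable {K : Type*} [Field K] [NumberField K] [IsCyclotomicExtension {3} ℚ K]
  {ζ : K} (hζ : IsPrimitiveRoot ζ 3)

include hζ in
theorem eq_mul_of_add_eq_zero_of_mul_eq_unit_mul_cube {A B C d : K} (w : (𝓞 K)ˣ) (hd : d ≠ 0)
    (hsum : A + B + C = 0) (hprod : A * B * C = w * d ^ 3) :
    (B = ζ * A ∧ C = ζ ^ 2 * A) ∨ (B = ζ ^ 2 * A ∧ C = ζ * A) := by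
  have hrel := sq_add_self_add_one_eq_zero hζ
  set a := A + ζ * B + ζ ^ 2 * C with ha
  set b := A + ζ * C + ζ ^ 2 * B with hb
  have h1 : a + b = 3 * A := by linear_combination ha + hb + (B + C) * hrel - hsum
  have h2 : a + ζ * b = 3 * ζ ^ 2 * C := by
    linear_combination ha + ζ * hb + (A + ζ * B) * hrel - ζ ^ 2 * hsum
  have h3 : a + ζ ^ 2 * b = 3 * ζ * B := by
    linear_combination ha + ζ ^ 2 * hb + (A + ζ * (ζ - 1) * B + ζ * C) * hrel - ζ * hsum
  have hcubes : a ^ 3 + b ^ 3 = w * (3 * d) ^ 3 := by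
    rw [cube_add_cube_eq_mul hrel, h1, h2, h3]
    linear_combination 27 * A * B * C * hζ.pow_eq_one + 27 * hprod
  have hzero := mul_eq_zero_of_cube_add_cube hζ w hcubes
  have h3d : 3 * d ≠ 0 := mul_ne_zero three_ne_zero hd
  rcases mul_eq_zero.1 ((mul_eq_zero.1 hzero).resolve_right h3d) with h | h
  · exact .inl (eq_mul_of_add_mul_add_mul_eq_zero hζ hsum h)
  · exact .inr (eq_mul_of_add_mul_add_mul_eq_zero hζ (by linear_combination hsum) h).symm

include hζ in
theorem exists_unit_eq_mul_zeta_pow (u : (𝓞 K)ˣ) :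
    ∃ e : K, e ^ 2 = 1 ∧ ∃ i < 3, algebraMap (𝓞 K) K u = e * ζ ^ i := by
  have hz : algebraMap (𝓞 K) K hζ.toInteger = ζ := rfl
  have hu := IsCyclotomicExtension.Rat.Three.Units.mem hζ u
  simp only [List.mem_cons, List.not_mem_nil, or_false] at hu
  rcases hu with rfl | rfl | rfl | rfl | rfl | rfl
  · exact ⟨1, by norm_num, 0, by norm_num, by simp⟩
  · exact ⟨-1, by norm_num, 0, by norm_num, by simp⟩
  · exact ⟨1, by norm_num, 1, by norm_num, by simp [hz]⟩
  · exact ⟨-1, by norm_num, 1, by norm_num, by simp [hz]⟩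
  · exact ⟨1, by norm_num, 2, by norm_num, by simp [hz]⟩
  · exact ⟨-1, by norm_num, 2, by norm_num, by simp [hz]⟩

include hζ in
theorem exists_cube_eq_mul_zeta_pow_iff {e : K} (he : e ^ 2 = 1) (k : ℕ) :
    (∃ z, z ^ 3 = e * ζ ^ k) ↔ 3 ∣ k := by
  constructor
  · rintro ⟨z, hz⟩
    have hz6 : z ^ 6 = ζ ^ (2 * k) := by
      rw [pow_mul', ← one_mul ((ζ ^ k) ^ 2), ← he, ← mul_pow, ← hz, ← pow_mul]
    have hz18 : z ^ 18 = 1 := by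
      rw [pow_mul z 6 3, hz6, ← pow_mul, mul_comm, pow_mul, hζ.pow_eq_one, one_pow]
    obtain ⟨r, -, hr⟩ := hζ.exists_pow_or_neg_mul_pow_of_isOfFinOrder (by decide)
      (isOfFinOrder_iff_pow_eq_one.2 ⟨18, by norm_num, hz18⟩)
    have hζr : (ζ ^ r) ^ 6 = 1 := by
      rw [← pow_mul, mul_comm, pow_mul, pow_mul ζ 3 2, hζ.pow_eq_one, one_pow, one_pow]
    have hz6' : z ^ 6 = 1 := by
      rcases hr with rfl | rfl
      · exact hζr
      · rwa [Even.neg_pow (by decide)]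
    exact (Nat.Coprime.dvd_mul_left (by decide)).1 (hζ.dvd_of_pow_eq_one _ (hz6 ▸ hz6'))
  · rintro ⟨m, rfl⟩
    exact ⟨e, by rw [pow_mul, hζ.pow_eq_one, one_pow]; linear_combination e * he⟩

include hζ in
theorem card_nthRootsFinset_mul_zeta_pow {e : K} (he : e ^ 2 = 1) (k : ℕ) :
    (Polynomial.nthRootsFinset 3 (e * ζ ^ k)).card = if 3 ∣ k then 3 else 0 := by
  classical
  have hne : e * ζ ^ k ≠ 0 := by
    refine mul_ne_zero (fun he0 ↦ ?_) (pow_ne_zero k (hζ.ne_zero three_ne_zero))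
    rw [he0, zero_pow two_ne_zero] at he
    exact zero_ne_one he
  rw [Polynomial.nthRootsFinset_def, Multiset.toFinset_card_of_nodup (hζ.nthRoots_nodup hne),
    hζ.card_nthRoots]
  simp only [exists_cube_eq_mul_zeta_pow_iff hζ he]

end Cyclotomic

section Count

variable {F : Type*} [Field F]

/-- The plane cubic `x ^ 3 + u * y ^ 3 + v * z ^ 3 = 0`. The choice of representative is
immaterial since the equation is homogeneous, see `mk_mem_twistedFermatCubic`. -/
def twistedFermatCubic (u v : F) : Set (Projectivization F (Fin 3 → F)) :=
  {P | P.rep 0 ^ 3 + u * P.rep 1 ^ 3 + v * P.rep 2 ^ 3 = 0}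

theorem mk_mem_twistedFermatCubic {u v : F} {w : Fin 3 → F} (hw : w ≠ 0) :
    Projectivization.mk F w hw ∈ twistedFermatCubic u v ↔
      w 0 ^ 3 + u * w 1 ^ 3 + v * w 2 ^ 3 = 0 := by
  obtain ⟨a, ha⟩ := Projectivization.exists_smul_eq_mk_rep F w hw
  have hscale : ((a : F) * w 0) ^ 3 + u * (a * w 1) ^ 3 + v * (a * w 2) ^ 3 =
      (a : F) ^ 3 * (w 0 ^ 3 + u * w 1 ^ 3 + v * w 2 ^ 3) := by ring
  simp [twistedFermatCubic, ← ha, Units.smul_def, hscale]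

/-- The point `(1 : b : c)`. -/
def affinePoint (p : F × F) : Projectivization F (Fin 3 → F) :=
  .mk F ![1, p.1, p.2] fun h ↦ one_ne_zero (congrFun h 0)

/-- The point `(0 : 1 : c)`. -/
def pointAtInfinity (c : F) : Projectivization F (Fin 3 → F) :=
  .mk F ![0, 1, c] fun h ↦ one_ne_zero (congrFun h 1)

theorem affinePoint_injective : Function.Injective (affinePoint (F := F)) := by
  rintro ⟨b, c⟩ ⟨b', c'⟩ h
  obtain ⟨a, ha⟩ := (Projectivization.mk_eq_mk_iff' F _ _ _ _).1 h
  obtain rfl : a = 1 := by simpa using congrFun ha 0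
  exact Prod.ext (by simpa using (congrFun ha 1).symm) (by simpa using (congrFun ha 2).symm)

theorem pointAtInfinity_injective : Function.Injective (pointAtInfinity (F := F)) := by
  intro c c' h
  obtain ⟨a, ha⟩ := (Projectivization.mk_eq_mk_iff' F _ _ _ _).1 h
  obtain rfl : a = 1 := by simpa using congrFun ha 1
  simpa using (congrFun ha 2).symm

theorem affinePoint_ne_pointAtInfinity (p : F × F) (c : F) : affinePoint p ≠ pointAtInfinity c := by
  intro h
  obtain ⟨a, ha⟩ := (Projectivization.mk_eq_mk_iff' F _ _ _ _).1 h
  simpa using congrFun ha 0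

theorem twistedFermatCubic_eq_union {u v : F} (hv : v ≠ 0) :
    twistedFermatCubic u v = affinePoint '' {p | 1 + u * p.1 ^ 3 + v * p.2 ^ 3 = 0} ∪
      pointAtInfinity '' {c | c ^ 3 = -u / v} := by
  apply Set.Subset.antisymm
  · intro P hP
    induction P with | h w hw
    rw [mk_mem_twistedFermatCubic] at hP
    by_cases h0 : w 0 = 0
    · have h1 : w 1 ≠ 0 := fun h1 ↦ hw <| by
        have h2 : w 2 = 0 := by simpa [h0, h1, hv] using hP
        ext i
        fin_cases i <;> assumption
      refine .inr ⟨w 2 / w 1, ?_, (Projectivization.mk_eq_mk_iff' F _ _ _ _).2 ⟨(w 1)⁻¹, ?_⟩⟩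
      · rw [Set.mem_ofPred_eq]
        field_simp
        linear_combination hP - w 0 ^ 2 * h0
      · ext i
        fin_cases i <;> simp [h0, h1, div_eq_inv_mul]
    · refine .inl ⟨(w 1 / w 0, w 2 / w 0), ?_,
        (Projectivization.mk_eq_mk_iff' F _ _ _ _).2 ⟨(w 0)⁻¹, ?_⟩⟩
      · rw [Set.mem_ofPred_eq]
        field_simp
        linear_combination hP
      · ext i
        fin_cases i <;> simp [h0, div_eq_inv_mul]
  · rintro _ (⟨p, hp, rfl⟩ | ⟨c, hc, rfl⟩)
    · exact (mk_mem_twistedFermatCubic _).2 (by simpa using hp)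
    · rw [Set.mem_ofPred_eq, eq_div_iff hv] at hc
      have hcurve : (0 : F) ^ 3 + u * 1 ^ 3 + v * c ^ 3 = 0 := by linear_combination hc
      exact (mk_mem_twistedFermatCubic _).2 (by simpa using hcurve)

theorem encard_twistedFermatCubic {u v : F} (hv : v ≠ 0) :
    (twistedFermatCubic u v).encard =
      {p : F × F | 1 + u * p.1 ^ 3 + v * p.2 ^ 3 = 0}.encard + {c : F | c ^ 3 = -u / v}.encard := by
  rw [twistedFermatCubic_eq_union hv, Set.encard_union_eq, affinePoint_injective.encard_image,
    pointAtInfinity_injective.encard_image]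
  rw [Set.disjoint_left]
  rintro _ ⟨p, -, rfl⟩ ⟨c, -, h⟩
  exact affinePoint_ne_pointAtInfinity p c h.symm

open Polynomial in
theorem encard_setOf_mul_cubes_mem {u v : F} (hu : u ≠ 0) (hv : v ≠ 0) (P : Finset (F × F)) :
    {p : F × F | (u * p.1 ^ 3, v * p.2 ^ 3) ∈ P}.encard =
      (∑ q ∈ P, (nthRootsFinset 3 (q.1 / u)).card * (nthRootsFinset 3 (q.2 / v)).card : ℕ) := by
  classical
  have hmem (p q : F × F) : p ∈ nthRootsFinset 3 (q.1 / u) ×ˢ nthRootsFinset 3 (q.2 / v) ↔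
      (u * p.1 ^ 3, v * p.2 ^ 3) = q := by
    rw [Finset.mem_product, mem_nthRootsFinset three_pos, mem_nthRootsFinset three_pos,
      eq_div_iff hu, eq_div_iff hv, mul_comm u, mul_comm v, Prod.ext_iff]
  have hset : {p : F × F | (u * p.1 ^ 3, v * p.2 ^ 3) ∈ P} =
      P.biUnion fun q ↦ nthRootsFinset 3 (q.1 / u) ×ˢ nthRootsFinset 3 (q.2 / v) := by
    ext p
    simp only [Set.mem_ofPred_eq, Finset.mem_coe, Finset.mem_biUnion, hmem, exists_eq_right']
  rw [hset, Set.encard_coe_eq_coe_finsetCard, Finset.card_biUnion]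
  · simp only [Finset.card_product]
  · exact fun q _ q' _ hqq' ↦ Finset.disjoint_left.2 fun p hp hp' ↦
      hqq' (((hmem p q).1 hp).symm.trans ((hmem p q').1 hp'))

end Count

section Points

open Polynomial

variable {K : Type*} [Field K] [NumberField K] [IsCyclotomicExtension {3} ℚ K]
  {ζ : K} (hζ : IsPrimitiveRoot ζ 3)

include hζ in
theorem one_add_mul_cube_add_mul_cube_eq_zero_iff [DecidableEq K] (u v : (𝓞 K)ˣ) (b c : K) :
    1 + algebraMap (𝓞 K) K u * b ^ 3 + algebraMap (𝓞 K) K v * c ^ 3 = 0 ↔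
      (algebraMap (𝓞 K) K u * b ^ 3, algebraMap (𝓞 K) K v * c ^ 3) ∈
        ({(0, -1), (-1, 0), (ζ, ζ ^ 2), (ζ ^ 2, ζ)} : Finset (K × K)) := by
  simp only [Finset.mem_insert, Finset.mem_singleton, Prod.mk.injEq]
  constructor
  · intro h
    by_cases hb : b = 0
    · subst hb
      exact .inl ⟨by ring, by linear_combination h⟩
    by_cases hc : c = 0
    · subst hc
      exact .inr (.inl ⟨by linear_combination h, by ring⟩)
    · right
      right
      simpa only [mul_one] using eq_mul_of_add_eq_zero_of_mul_eq_unit_mul_cube hζ (u * v)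
        (mul_ne_zero hb hc) h (by push_cast; ring)
  · rintro (⟨hb, hc⟩ | ⟨hb, hc⟩ | ⟨hb, hc⟩ | ⟨hb, hc⟩)
    · linear_combination hb + hc
    · linear_combination hb + hc
    · linear_combination hb + hc + sq_add_self_add_one_eq_zero hζ
    · linear_combination hb + hc + sq_add_self_add_one_eq_zero hζ

include hζ in
theorem encard_twistedFermatCubic_eq_card_nthRootsFinset (u v : (𝓞 K)ˣ) :
    letI r (a : K) : ℕ := (nthRootsFinset 3 a).card
    letI U : K := algebraMap (𝓞 K) K u
    letI V : K := algebraMap (𝓞 K) K v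
    (twistedFermatCubic U V).encard = (r (-1 / V) + r (-1 / U) + r (ζ / U) * r (ζ ^ 2 / V) +
      r (ζ ^ 2 / U) * r (ζ / V) + r (-U / V) : ℕ) := by
  classical
  have hu : algebraMap (𝓞 K) K u ≠ 0 := by simp
  have hv : algebraMap (𝓞 K) K v ≠ 0 := by simp
  have hroots (a : K) : {c : K | c ^ 3 = a} = nthRootsFinset 3 a := by
    ext c
    rw [Set.mem_ofPred_eq, Finset.mem_coe, mem_nthRootsFinset three_pos]
  have hzero : (nthRootsFinset 3 (0 : K)).card = 1 := by simp [nthRootsFinset_def]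
  have hζ0 : 0 ≠ ζ := (hζ.ne_zero three_ne_zero).symm
  have hζζ0 : 0 ≠ ζ ^ 2 := (pow_ne_zero 2 hζ0.symm).symm
  have hζζ : ζ ≠ ζ ^ 2 := fun h ↦
    absurd (hζ.pow_inj (by decide) (by decide) ((pow_one ζ).trans h)) (by decide : 1 ≠ 2)
  simp only [encard_twistedFermatCubic hv, one_add_mul_cube_add_mul_cube_eq_zero_iff hζ, hroots,
    encard_setOf_mul_cubes_mem hu hv, Set.encard_coe_eq_coe_finsetCard]
  rw [Finset.sum_insert (by simp [hζ0, hζζ0]), Finset.sum_insert (by simp [hζ0, hζζ0]),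
    Finset.sum_pair (by simp [hζζ])]
  simp only [zero_div, hzero]
  push_cast
  ring

include hζ in
theorem card_nthRootsFinset_mul_zeta_pow_div {e f : K} (he : e ^ 2 = 1) (hf : f ^ 2 = 1)
    (k i : ℕ) : (nthRootsFinset 3 (e * ζ ^ k / (f * ζ ^ i))).card =
      if 3 ∣ k + 2 * i then 3 else 0 := by
  have hinv : (f * ζ ^ i)⁻¹ = f * ζ ^ (2 * i) := by
    refine inv_eq_of_mul_eq_one_left ?_
    calc f * ζ ^ (2 * i) * (f * ζ ^ i) = f ^ 2 * (ζ ^ 3) ^ i := by ring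
      _ = 1 := by rw [hf, hζ.pow_eq_one, one_pow, one_mul]
  rw [← card_nthRootsFinset_mul_zeta_pow hζ (e := e * f) (by rw [mul_pow, he, hf, one_mul]),
    div_eq_mul_inv, hinv, mul_mul_mul_comm, ← pow_add]

include hζ in
theorem encard_twistedFermatCubic_eq_three_or_nine (u v : (𝓞 K)ˣ) :
    (twistedFermatCubic (algebraMap (𝓞 K) K u) (algebraMap (𝓞 K) K v)).encard = 3 ∨
      (twistedFermatCubic (algebraMap (𝓞 K) K u) (algebraMap (𝓞 K) K v)).encard = 9 := by
  obtain ⟨e, he, i, hi, hu⟩ := exists_unit_eq_mul_zeta_pow hζ u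
  obtain ⟨f, hf, j, hj, hv⟩ := exists_unit_eq_mul_zeta_pow hζ v
  have hneg {g : K} (hg : g ^ 2 = 1) (k : ℕ) :
      (nthRootsFinset 3 (-1 / (g * ζ ^ k))).card = if 3 ∣ 2 * k then 3 else 0 := by
    simpa using card_nthRootsFinset_mul_zeta_pow_div hζ (e := -1) (by norm_num) hg 0 k
  have hzeta {g : K} (hg : g ^ 2 = 1) (k : ℕ) :
      (nthRootsFinset 3 (ζ / (g * ζ ^ k))).card = if 3 ∣ 1 + 2 * k then 3 else 0 := by
    simpa using card_nthRootsFinset_mul_zeta_pow_div hζ (e := 1) (by norm_num) hg 1 k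
  have hsq {g : K} (hg : g ^ 2 = 1) (k : ℕ) :
      (nthRootsFinset 3 (ζ ^ 2 / (g * ζ ^ k))).card = if 3 ∣ 2 + 2 * k then 3 else 0 := by
    simpa using card_nthRootsFinset_mul_zeta_pow_div hζ (e := 1) (by norm_num) hg 2 k
  have hinf : (nthRootsFinset 3 (-(e * ζ ^ i) / (f * ζ ^ j))).card =
      if 3 ∣ i + 2 * j then 3 else 0 := by
    simpa using card_nthRootsFinset_mul_zeta_pow_div hζ (e := -e) (by simpa using he) hf i j
  rw [encard_twistedFermatCubic_eq_card_nthRootsFinset hζ, hu, hv]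
  simp only [hneg, hzeta, hsq, hinf, he, hf]
  norm_cast
  interval_cases i <;> interval_cases j <;> decide

end Points

section QuadraticField

open Polynomial

theorem isPrimitiveRoot_three_of_sq_eq_neg_three {F : Type*} [Field F] [CharZero F] {s : F}
    (hs : s ^ 2 = -3) : IsPrimitiveRoot ((-1 + s) / 2) 3 := by
  rw [← isRoot_cyclotomic_iff, cyclotomic_three, IsRoot.def]
  simp only [eval_add, eval_pow, eval_X, eval_one]
  linear_combination hs / 4

theorem isCyclotomicExtension_of_finrank_eq_totient_s6 {F L : Type*} [Field F] [Field L]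
    [Algebra F L] [FiniteDimensional F L] {n : ℕ} [NeZero (n : F)] {ζ : L}
    (hζ : IsPrimitiveRoot ζ n)
    (hirr : Irreducible (cyclotomic n F)) (hfinrank : Module.finrank F L = n.totient) :
    IsCyclotomicExtension {n} F L := by
  have := NeZero.of_neZero_natCast F (n := n)
  have htop : IntermediateField.adjoin F {ζ} = ⊤ := by
    apply IntermediateField.eq_of_le_of_finrank_eq le_top
    rw [IntermediateField.finrank_top', hfinrank,
      IntermediateField.adjoin.finrank (Algebra.IsIntegral.isIntegral ζ),
      ← hζ.minpoly_eq_cyclotomic_of_irreducible hirr, natDegree_cyclotomic]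
  have hadjoin := hζ.intermediateField_adjoin_isCyclotomicExtension F
  rw [htop] at hadjoin
  exact IsCyclotomicExtension.equiv {n} F _ IntermediateField.topEquiv

end QuadraticField

/-- Let `K = ℚ(√-3)` and let `u, v` be units of its ring of integers.  The set of points
`(x : y : z)` of the projective plane `ℙ²(K)` satisfying `x³ + u y³ + v z³ = 0` is finite,
of cardinality `3` or `9`. -/
theorem twisted_fermat_cubic_card_points_over_Q_sqrt_neg_three
    (K : Type) [Field K] [NumberField K]
    (s : K) (hs : s ^ 2 = -3) (hK : Module.finrank ℚ K = 2)
    (u v : (𝓞 K)ˣ)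
    (S : Set (Projectivization K (Fin 3 → K)))
    (hS : S = {P : Projectivization K (Fin 3 → K) |
      (P.rep 0) ^ 3 + algebraMap (𝓞 K) K (u : 𝓞 K) * (P.rep 1) ^ 3
        + algebraMap (𝓞 K) K (v : 𝓞 K) * (P.rep 2) ^ 3 = 0}) :
    S.Finite ∧ (S.ncard = 3 ∨ S.ncard = 9) := by
  obtain hS : S = twistedFermatCubic (algebraMap (𝓞 K) K u) (algebraMap (𝓞 K) K v) := hS
  have hζ := isPrimitiveRoot_three_of_sq_eq_neg_three hs
  have := isCyclotomicExtension_of_finrank_eq_totient_s6 hζ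
    (Polynomial.cyclotomic.irreducible_rat three_pos) hK
  rcases encard_twistedFermatCubic_eq_three_or_nine hζ u v with h | h
  · exact hS ▸ ⟨Set.finite_of_encard_eq_coe h, .inl (by rw [Set.ncard_def, h]; rfl)⟩
  · exact hS ▸ ⟨Set.finite_of_encard_eq_coe h, .inr (by rw [Set.ncard_def, h]; rfl)⟩
end

section
/- In the polynomial ring ℤ[a₁, a₃] in two variables, let Δ = a₃³(a₁³ − 27a₃) and c₆ = −a₁⁶ + 36a₁³a₃ − 216a₃² (the discriminant and c₆-invariant of the Weierstrass curve y² + a₁xy + a₃y = x³). Then the ideal of ℤ[a₁, a₃] generated by c₆ and Δ contains both a₁¹⁵ and 27a₃⁵. -/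
/-!
Put `x = a₁³` and `y = a₃`. Modulo `c₆` we have `x² = 36xy - 216y²`, and modulo `Δ` we have
`y³x = 27y⁴`. Multiplying the first relation by `y³` and eliminating `x` with the second gives
`729y⁵ = 756y⁵`, that is, `27y⁵ = 0`. The same two relations reduce `x⁵` to an integer multiple of
`y⁵`, and that integer happens to be divisible by `27`.
-/

section BinaryQuadraticRelation

variable {R : Type*} [CommRing R] {p q r x y : R}

theorem pow_five_eq_of_sq_eq (hx : x ^ 2 = p * x * y - q * y ^ 2) :
    x ^ 5 = (p ^ 4 - 3 * p ^ 2 * q + q ^ 2) * x * y ^ 4 - p * q * (p ^ 2 - 2 * q) * y ^ 5 := by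
  have cube_eq : x ^ 3 = (p ^ 2 - q) * x * y ^ 2 - p * q * y ^ 3 := by
    linear_combination (x + p * y) * hx
  calc
    x ^ 5 = x ^ 2 * x ^ 3 := by ring
    _ = x ^ 2 * ((p ^ 2 - q) * x * y ^ 2 - p * q * y ^ 3) := by rw [cube_eq]
    _ = (p ^ 2 - q) * x ^ 3 * y ^ 2 - p * q * x ^ 2 * y ^ 3 := by ring
    _ = (p ^ 2 - q) * ((p ^ 2 - q) * x * y ^ 2 - p * q * y ^ 3) * y ^ 2
          - p * q * (p * x * y - q * y ^ 2) * y ^ 3 := by rw [cube_eq, hx]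
    _ = _ := by ring

theorem mul_pow_five_eq_zero_of_sq_eq (hx : x ^ 2 = p * x * y - q * y ^ 2)
    (hxy : y ^ 3 * x = r * y ^ 4) : (r ^ 2 - p * r + q) * y ^ 5 = 0 := by
  have sq_left : y ^ 3 * x ^ 2 = r ^ 2 * y ^ 5 := by
    linear_combination (x + r * y) * hxy
  have sq_right : y ^ 3 * x ^ 2 = (p * r - q) * y ^ 5 := by
    linear_combination y ^ 3 * hx + p * y * hxy
  linear_combination sq_right - sq_left

theorem pow_five_eq_mul_pow_five_of_sq_eq (hx : x ^ 2 = p * x * y - q * y ^ 2)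
    (hxy : y ^ 3 * x = r * y ^ 4) :
    x ^ 5 = ((p ^ 4 - 3 * p ^ 2 * q + q ^ 2) * r - p * q * (p ^ 2 - 2 * q)) * y ^ 5 := by
  linear_combination pow_five_eq_of_sq_eq hx + (p ^ 4 - 3 * p ^ 2 * q + q ^ 2) * y * hxy

end BinaryQuadraticRelation

section VanishingInvariants

variable {R : Type*} [CommRing R] {a₁ a₃ : R}

theorem twentySeven_mul_pow_five_eq_zero_of_c₆_of_discriminant
    (hc₆ : -a₁ ^ 6 + 36 * a₁ ^ 3 * a₃ - 216 * a₃ ^ 2 = 0)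
    (hΔ : a₃ ^ 3 * (a₁ ^ 3 - 27 * a₃) = 0) : 27 * a₃ ^ 5 = 0 := by
  have sq_eq : (a₁ ^ 3) ^ 2 = 36 * a₁ ^ 3 * a₃ - 216 * a₃ ^ 2 := by linear_combination -hc₆
  have cube_mul_eq : a₃ ^ 3 * a₁ ^ 3 = 27 * a₃ ^ 4 := by linear_combination hΔ
  linear_combination -mul_pow_five_eq_zero_of_sq_eq sq_eq cube_mul_eq

theorem pow_fifteen_eq_zero_of_c₆_of_discriminant
    (hc₆ : -a₁ ^ 6 + 36 * a₁ ^ 3 * a₃ - 216 * a₃ ^ 2 = 0)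
    (hΔ : a₃ ^ 3 * (a₁ ^ 3 - 27 * a₃) = 0) : a₁ ^ 15 = 0 := by
  have sq_eq : (a₁ ^ 3) ^ 2 = 36 * a₁ ^ 3 * a₃ - 216 * a₃ ^ 2 := by linear_combination -hc₆
  have cube_mul_eq : a₃ ^ 3 * a₁ ^ 3 = 27 * a₃ ^ 4 := by linear_combination hΔ
  calc
    a₁ ^ 15 = (a₁ ^ 3) ^ 5 := by ring
    _ = ((36 ^ 4 - 3 * 36 ^ 2 * 216 + 216 ^ 2) * 27 - 36 * 216 * (36 ^ 2 - 2 * 216)) * a₃ ^ 5 :=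
      pow_five_eq_mul_pow_five_of_sq_eq sq_eq cube_mul_eq
    _ = 637632 * (27 * a₃ ^ 5) := by ring
    _ = 0 := by rw [twentySeven_mul_pow_five_eq_zero_of_c₆_of_discriminant hc₆ hΔ, mul_zero]

end VanishingInvariants

theorem three_torsion_discriminant_c6_ideal_membership_general
    {R : Type*} [CommRing R] (a₁ a₃ : R) :
    a₁ ^ 15 ∈ Ideal.span ({-a₁ ^ 6 + 36 * a₁ ^ 3 * a₃ - 216 * a₃ ^ 2,
        a₃ ^ 3 * (a₁ ^ 3 - 27 * a₃)} : Set R) ∧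
    27 * a₃ ^ 5 ∈ Ideal.span ({-a₁ ^ 6 + 36 * a₁ ^ 3 * a₃ - 216 * a₃ ^ 2,
        a₃ ^ 3 * (a₁ ^ 3 - 27 * a₃)} : Set R) := by
  set c₆ := -a₁ ^ 6 + 36 * a₁ ^ 3 * a₃ - 216 * a₃ ^ 2 with c₆_def
  set Δ := a₃ ^ 3 * (a₁ ^ 3 - 27 * a₃) with Δ_def
  set I := Ideal.span {c₆, Δ}
  have hc₆ : Ideal.Quotient.mk I c₆ = 0 :=
    Ideal.Quotient.eq_zero_iff_mem.mpr (Ideal.subset_span (Set.mem_insert c₆ {Δ}))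
  have hΔ : Ideal.Quotient.mk I Δ = 0 :=
    Ideal.Quotient.eq_zero_iff_mem.mpr (Ideal.subset_span (Set.mem_insert_of_mem c₆ rfl))
  simp only [c₆_def, Δ_def, map_add, map_sub, map_neg, map_mul, map_pow, map_ofNat] at hc₆ hΔ
  simp only [← Ideal.Quotient.eq_zero_iff_mem, map_mul, map_pow, map_ofNat]
  exact ⟨pow_fifteen_eq_zero_of_c₆_of_discriminant hc₆ hΔ,
    twentySeven_mul_pow_five_eq_zero_of_c₆_of_discriminant hc₆ hΔ⟩

/-- In `ℤ[a₁, a₃]`, the ideal generated by the invariant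
`c₆ = -a₁⁶ + 36a₁³a₃ - 216a₃²` and the discriminant `Δ = a₃³(a₁³ - 27a₃)` of the Weierstrass
curve `y² + a₁xy + a₃y = x³` contains both `a₁¹⁵` and `27a₃⁵`. -/
theorem three_torsion_discriminant_c6_ideal_membership
    (a₁ a₃ : MvPolynomial (Fin 2) ℤ)
    (ha₁ : a₁ = MvPolynomial.X 0) (ha₃ : a₃ = MvPolynomial.X 1) :
    a₁ ^ 15 ∈ Ideal.span ({-a₁ ^ 6 + 36 * a₁ ^ 3 * a₃ - 216 * a₃ ^ 2,
        a₃ ^ 3 * (a₁ ^ 3 - 27 * a₃)} : Set (MvPolynomial (Fin 2) ℤ)) ∧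
    27 * a₃ ^ 5 ∈ Ideal.span ({-a₁ ^ 6 + 36 * a₁ ^ 3 * a₃ - 216 * a₃ ^ 2,
        a₃ ^ 3 * (a₁ ^ 3 - 27 * a₃)} : Set (MvPolynomial (Fin 2) ℤ)) := by
  exact three_torsion_discriminant_c6_ideal_membership_general a₁ a₃
end

section
/- Let d ∈ {1, 2, 3, 7, 11, 19, 43, 67, 163}, K = ℚ(√−d) with ring of integers O_K, and let ε be a generator of the unit group O_K^× (so ε = √−1 for d = 1, ε = (1+√−3)/2 for d = 3, and ε = −1 otherwise). Then there is no x ∈ O_K with x² ≡ ε (mod 4), i.e. ε is not congruent to a square modulo 4 in O_K. -/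
open NumberField

/-!
In a free `ℤ`-algebra `R` of rank two every `x` satisfies `x² = (tr x) x - N x`, and any two
discriminants `(tr x)² - 4 N x` have a square product.

If `4 ∣ x² + 1`, taking the trace and the norm of `x² + 1` forces `(tr x)² - 4 N x = 4 n` with
`n ≡ 3 (mod 4)`. Against `s = √-d`, whose discriminant is `-4 d`, this makes `-n d ≡ d (mod 4)` a
square, so `-1` is not a square modulo `4` when `d ≡ 2, 3 (mod 4)`. If `d = 1`, a congruence
`x² ≡ s (mod 2)` first forces `tr x` to be even, whence `s ≡ -N x (mod 2)`, and taking norms gives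
`(N x)² ≡ -1 (mod 4)`. Since the units that are squares modulo `4` form a subgroup, a generator of
the unit group is among them only if all units are.
-/

theorem sq_emod_four_eq_zero_or_one (k : ℤ) : k ^ 2 % 4 = 0 ∨ k ^ 2 % 4 = 1 := by
  rcases Int.even_or_odd k with hk | hk
  · exact .inl (Int.emod_eq_zero_of_dvd (pow_dvd_pow_of_dvd hk.two_dvd 2))
  · exact .inr (Int.sq_mod_four_eq_one_of_odd hk)

theorem even_and_even_of_four_dvd_sq_add_sq {a b : ℤ} (h : 4 ∣ a ^ 2 + b ^ 2) :
    Even a ∧ Even b := by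
  have ha := sq_emod_four_eq_zero_or_one a
  have hb := sq_emod_four_eq_zero_or_one b
  rw [← Int.even_pow' two_ne_zero, ← Int.even_pow' (m := b) two_ne_zero, Int.even_iff, Int.even_iff]
  omega

namespace QuadraticExtension

open Algebra

section CommRing

variable {A R : Type*} [CommRing A] [Nontrivial A] [CommRing R] [Algebra A R]
  [IsQuadraticExtension A R]

variable (A R) in
theorem algebraMap_injective : Function.Injective (algebraMap A R) := by
  have : Nontrivial R := Module.nontrivial_of_finrank_pos (R := A)
    ((IsQuadraticExtension.finrank_eq_two A R).symm ▸ two_pos)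
  exact FaithfulSMul.algebraMap_injective A R

theorem sq_eq_trace_smul_sub_norm (x : R) :
    x ^ 2 = trace A R x • x - algebraMap A R (norm A x) := by
  let b := Module.finBasisOfFinrankEq A R (IsQuadraticExtension.finrank_eq_two A R)
  apply leftMulMatrix_injective b
  have hCH := Matrix.aeval_self_charpoly (leftMulMatrix b x)
  simp only [Matrix.charpoly_fin_two, map_add, map_sub, map_mul, map_pow, Polynomial.aeval_X,
    Polynomial.aeval_C, ← Algebra.smul_def, ← trace_eq_matrix_trace b,
    ← norm_eq_matrix_det b] at hCH
  rw [map_sub, map_pow, map_smul, AlgHom.commutes]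
  exact sub_eq_zero.1 (by rw [← hCH]; abel)

theorem norm_add_eq (x y : R) :
    norm A (x + y) = norm A x + norm A y + trace A R x * trace A R y - trace A R (x * y) := by
  let b := Module.finBasisOfFinrankEq A R (IsQuadraticExtension.finrank_eq_two A R)
  simp only [norm_eq_matrix_det b, trace_eq_matrix_trace b, map_add, map_mul,
    Matrix.det_fin_two, Matrix.trace_fin_two, Matrix.mul_apply, Fin.sum_univ_two, Matrix.add_apply]
  ring

theorem trace_algebraMap_eq_two_mul (a : A) : trace A R (algebraMap A R a) = 2 * a := by
  rw [trace_algebraMap, IsQuadraticExtension.finrank_eq_two A R, two_nsmul, two_mul]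

theorem norm_algebraMap_eq_sq (a : A) : norm A (algebraMap A R a) = a ^ 2 := by
  rw [norm_algebraMap_of_basis (Module.finBasisOfFinrankEq A R
    (IsQuadraticExtension.finrank_eq_two A R)), Fintype.card_fin]

theorem trace_sq (x : R) : trace A R (x ^ 2) = trace A R x ^ 2 - 2 * norm A x := by
  rw [sq_eq_trace_smul_sub_norm (A := A) x, map_sub, map_smul, trace_algebraMap_eq_two_mul,
    smul_eq_mul, sq]

theorem norm_algebraMap_add (a : A) (x : R) :
    norm A (algebraMap A R a + x) = a ^ 2 + a * trace A R x + norm A x := by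
  rw [norm_add_eq, norm_algebraMap_eq_sq, trace_algebraMap_eq_two_mul, ← Algebra.smul_def,
    map_smul, smul_eq_mul]
  ring

theorem two_mul_sub_trace_mul_two_mul_sub_trace (x y : R) :
    (2 * x - algebraMap A R (trace A R x)) * (2 * y - algebraMap A R (trace A R y)) =
      algebraMap A R (2 * trace A R (x * y) - trace A R x * trace A R y) := by
  have hxy := sq_eq_trace_smul_sub_norm (A := A) (x + y)
  rw [norm_add_eq] at hxy
  have hx := sq_eq_trace_smul_sub_norm (A := A) x
  have hy := sq_eq_trace_smul_sub_norm (A := A) y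
  simp only [Algebra.smul_def, map_add, map_sub, map_mul, map_ofNat] at hxy hx hy ⊢
  linear_combination 2 * hxy - 2 * hx - 2 * hy

theorem discrim_mul_discrim_eq_sq (x y : R) :
    (trace A R x ^ 2 - 4 * norm A x) * (trace A R y ^ 2 - 4 * norm A y) =
      (2 * trace A R (x * y) - trace A R x * trace A R y) ^ 2 := by
  apply algebraMap_injective A R
  have hdisc (z : R) : algebraMap A R (trace A R z ^ 2 - 4 * norm A z) =
      (2 * z - algebraMap A R (trace A R z)) ^ 2 := by
    have hz := sq_eq_trace_smul_sub_norm (A := A) z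
    simp only [Algebra.smul_def, map_sub, map_pow, map_mul, map_ofNat] at hz ⊢
    linear_combination (-4) * hz
  rw [map_mul, hdisc, hdisc, ← mul_pow, two_mul_sub_trace_mul_two_mul_sub_trace, map_pow]

theorem trace_eq_zero_and_norm_eq_of_sq_eq {A R : Type*} [CommRing A] [LinearOrder A]
    [IsStrictOrderedRing A] [CommRing R] [Algebra A R] [IsQuadraticExtension A R] {s : R} {a : A}
    (hs : s ^ 2 = algebraMap A R a) (ha : a < 0) : trace A R s = 0 ∧ norm A s = -a := by
  have hlin : algebraMap A R (trace A R s) * s = algebraMap A R (a + norm A s) := by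
    rw [map_add, ← hs, sq_eq_trace_smul_sub_norm (A := A) s, Algebra.smul_def, sub_add_cancel]
  have hsq : trace A R s ^ 2 * a = (a + norm A s) ^ 2 := by
    apply algebraMap_injective A R
    rw [map_mul, map_pow, map_pow, ← hs, ← mul_pow, hlin]
  have htrace : trace A R s = 0 := by
    by_contra h
    have : trace A R s ^ 2 * a < 0 := mul_neg_of_pos_of_neg (by positivity) ha
    exact (hsq ▸ this).not_ge (sq_nonneg _)
  refine ⟨htrace, ?_⟩
  rw [htrace, zero_pow two_ne_zero, zero_mul, eq_comm, sq_eq_zero_iff] at hsq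
  exact (neg_eq_of_add_eq_zero_right hsq).symm

end CommRing

section Int

variable {R : Type*} [CommRing R] [IsQuadraticExtension ℤ R]

theorem exists_discrim_eq_four_mul_of_four_dvd_sq_add_one {x : R} (hx : 4 ∣ x ^ 2 + 1) :
    ∃ n : ℤ, trace ℤ R x ^ 2 - 4 * norm ℤ x = 4 * n ∧ n % 4 = 3 := by
  obtain ⟨z, hz⟩ := hx
  replace hz : algebraMap ℤ R 1 + x ^ 2 = algebraMap ℤ R 4 * z := by
    rw [map_one, map_ofNat, add_comm, hz]
  have htrace : 2 + (trace ℤ R x ^ 2 - 2 * norm ℤ x) = 4 * trace ℤ R z := by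
    simpa only [map_add, trace_algebraMap_eq_two_mul, trace_sq, ← Algebra.smul_def, map_smul,
      smul_eq_mul, mul_one] using congrArg (trace ℤ R) hz
  have hnorm : 1 + (trace ℤ R x ^ 2 - 2 * norm ℤ x) + norm ℤ x ^ 2 = 16 * norm ℤ z := by
    have h := congrArg (norm ℤ) hz
    rw [norm_algebraMap_add, map_mul, norm_algebraMap_eq_sq, trace_sq, map_pow] at h
    linarith
  obtain ⟨a, ha⟩ : Even (trace ℤ R x) :=
    (Int.even_pow' two_ne_zero).1 ⟨norm ℤ x + 2 * trace ℤ R z - 1, by linarith⟩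
  rw [ha] at htrace hnorm ⊢
  obtain ⟨b, hb⟩ : ∃ b, norm ℤ x = 2 * b + 1 := ⟨a ^ 2 - trace ℤ R z, by linarith⟩
  rw [hb] at hnorm ⊢
  have hsum : a ^ 2 + b ^ 2 = 4 * norm ℤ z := by linarith
  obtain ⟨⟨c, rfl⟩, ⟨e, rfl⟩⟩ := even_and_even_of_four_dvd_sq_add_sq ⟨_, hsum⟩
  exact ⟨4 * c ^ 2 - 4 * e - 1, by ring, by omega⟩

theorem not_four_dvd_sq_add_one {s : R} (htrace : trace ℤ R s = 0)
    (hnorm : norm ℤ s % 4 = 2 ∨ norm ℤ s % 4 = 3) (x : R) : ¬ 4 ∣ x ^ 2 + 1 := by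
  intro hx
  obtain ⟨n, hdisc, hn⟩ := exists_discrim_eq_four_mul_of_four_dvd_sq_add_one hx
  have hprod := discrim_mul_discrim_eq_sq (A := ℤ) x s
  rw [hdisc, htrace] at hprod
  have hsq : trace ℤ R (x * s) ^ 2 = 4 * (-n * norm ℤ s) := by linarith
  obtain ⟨k, hk⟩ : Even (trace ℤ R (x * s)) :=
    (Int.even_pow' two_ne_zero).1 ⟨2 * (-n * norm ℤ s), by linarith⟩
  have hmod : k ^ 2 ≡ norm ℤ s [ZMOD 4] := calc
    k ^ 2 = -n * norm ℤ s := by rw [hk] at hsq; linarith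
    _ ≡ 1 * norm ℤ s [ZMOD 4] := Int.ModEq.mul_right _ (by simp only [Int.ModEq]; omega)
    _ = norm ℤ s := one_mul _
  have hk4 := sq_emod_four_eq_zero_or_one k
  rw [Int.ModEq] at hmod
  omega

theorem not_two_dvd_sq_sub {s : R} (htrace : trace ℤ R s = 0)
    (hnorm : norm ℤ s % 4 = 1 ∨ norm ℤ s % 4 = 2) (x : R) : ¬ 2 ∣ x ^ 2 - s := by
  rintro ⟨z, hz⟩
  obtain ⟨k, hk⟩ : Even (trace ℤ R x) := by
    replace hz : x ^ 2 = s + algebraMap ℤ R 2 * z := by rw [map_ofNat, ← hz, add_sub_cancel]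
    have h : trace ℤ R x ^ 2 - 2 * norm ℤ x = 2 * trace ℤ R z := by
      simpa only [map_add, trace_sq, htrace, zero_add, ← Algebra.smul_def, map_smul, smul_eq_mul]
        using congrArg (trace ℤ R) hz
    exact (Int.even_pow' two_ne_zero).1 ⟨norm ℤ x + trace ℤ R z, by linarith⟩
  have hdvd : algebraMap ℤ R (norm ℤ x) + s = algebraMap ℤ R 2 * (k * x - z) := by
    have hx := sq_eq_trace_smul_sub_norm (A := ℤ) x
    rw [hk, zsmul_eq_mul] at hx
    push_cast at hx
    rw [map_ofNat]
    linear_combination hx - hz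
  have h : norm ℤ x ^ 2 + norm ℤ s = 4 * norm ℤ (k * x - z) := by
    have h := congrArg (norm ℤ) hdvd
    rw [norm_algebraMap_add, map_mul, norm_algebraMap_eq_sq, htrace] at h
    linarith
  have hx4 := sq_emod_four_eq_zero_or_one (norm ℤ x)
  omega

end Int

end QuadraticExtension

/-- The subgroup of units congruent to a square modulo `a`, which contains a generator of the unit
group only if every unit is a square modulo `a`. -/
def unitsSquareMod {R : Type*} [CommRing R] (a : R) : Subgroup Rˣ where
  carrier := {u | ∃ x : R, a ∣ x ^ 2 - u}
  one_mem' := ⟨1, by simp⟩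
  mul_mem' := by
    rintro u v ⟨x, hx⟩ ⟨y, hy⟩
    refine ⟨x * y, ?_⟩
    rw [mul_pow, Units.val_mul]
    exact dvd_mul_sub_mul hx hy
  inv_mem' := by
    rintro u ⟨x, hx⟩
    refine ⟨x * ↑u⁻¹, ?_⟩
    have : (x * ↑u⁻¹) ^ 2 - ↑u⁻¹ = (x ^ 2 - u) * (↑u⁻¹ : R) ^ 2 := by
      linear_combination (↑u⁻¹ : R) * u.mul_inv
    exact this ▸ hx.mul_right _

theorem mem_unitsSquareMod {R : Type*} [CommRing R] {a : R} {u : Rˣ} :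
    u ∈ unitsSquareMod a ↔ ∃ x : R, a ∣ x ^ 2 - u := Iff.rfl

theorem fundamental_unit_not_square_mod_four_general {R : Type*} [CommRing R]
    [Algebra.IsQuadraticExtension ℤ R] {d : ℕ} (hd : d = 1 ∨ d % 4 = 2 ∨ d % 4 = 3)
    {s : R} (hs : s ^ 2 = -(d : R)) {ε : Rˣ} (hε : ∀ t : Rˣ, t ∈ Subgroup.zpowers ε) :
    ¬ ∃ x : R, (4 : R) ∣ x ^ 2 - (ε : R) := by
  intro hx
  have hunits (t : Rˣ) : ∃ x : R, (4 : R) ∣ x ^ 2 - t :=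
    mem_unitsSquareMod.1 (Subgroup.zpowers_le.2 (mem_unitsSquareMod.2 hx) (hε t))
  obtain ⟨htrace, hnorm⟩ :=
    QuadraticExtension.trace_eq_zero_and_norm_eq_of_sq_eq (s := s) (a := (-d : ℤ))
      (by simpa using hs) (by omega)
  rw [neg_neg] at hnorm
  rcases hd with rfl | hd
  · have hunit : s * -s = 1 := by simpa [sq, neg_eq_iff_eq_neg] using hs
    obtain ⟨x, hx⟩ := hunits (.mkOfMulEqOne s (-s) hunit)
    have h24 : (2 : R) ∣ 4 := Dvd.intro 2 (by norm_num)
    exact QuadraticExtension.not_two_dvd_sq_sub htrace (by omega) x (h24.trans hx)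
  · obtain ⟨x, hx⟩ := hunits (-1)
    exact QuadraticExtension.not_four_dvd_sq_add_one htrace (by omega) x (by simpa using hx)

/-- Let `K = ℚ(√-d)` be one of the nine imaginary quadratic fields of class number one and
let `ε` be a generator of the unit group of `O_K`.  Then `ε` is not congruent to a square
modulo `4` in `O_K`. -/
theorem fundamental_unit_not_square_mod_four
    (d : ℕ) (hd : d ∈ ({1, 2, 3, 7, 11, 19, 43, 67, 163} : Finset ℕ))
    (K : Type) [Field K] [NumberField K]
    (s : K) (hs : s ^ 2 = -(d : K)) (hK : Module.finrank ℚ K = 2)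
    (ε : (𝓞 K)ˣ) (hε : ∀ t : (𝓞 K)ˣ, t ∈ Subgroup.zpowers ε) :
    ¬ ∃ x : 𝓞 K, (4 : 𝓞 K) ∣ x ^ 2 - (ε : 𝓞 K) := by
  have : Algebra.IsQuadraticExtension ℤ (𝓞 K) := ⟨(RingOfIntegers.rank K).trans hK⟩
  have hs_int : IsIntegral ℤ s := .of_pow two_pos (hs ▸ (isIntegral_natCast d).neg)
  have hσ : (⟨s, hs_int⟩ : 𝓞 K) ^ 2 = -(d : 𝓞 K) := RingOfIntegers.ext hs
  refine fundamental_unit_not_square_mod_four_general ?_ hσ hε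
  simp only [Finset.mem_insert, Finset.mem_singleton] at hd
  omega
end
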